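/- arXiv:2201.10791 — 7 statements merged into one kernel-verified Lean document; each statement's English description precedes it below -/
import Mathlib

section
/- Let k and d be positive integers with d ≤ k. Let D = (V, A) be a digraph such that Δ⁻(D) ≤ k+1 and γ(D) ≤ k + (d−k)/(d+1), i.e. (d+1)·|A[X]| ≤ d(k+1)·(|X|−1) for every X ⊆ V with |X| ≥ 2. Then A can be partitioned into k+1 branchings B₁, …, B_k, B_{k+1} such that Δ⁺(B_{k+1}) ≤ d, i.e. every vertex is the tail of at most d arcs of B_{k+1}. -/
/-!
Let `T` be the set of vertices of in-degree `k + 1`. The arcs entering `S ⊆ T` lie inside the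
closed in-neighbourhood `N[S]`, so the density bound gives `(d + 1) |S| ≤ d |N[S]|`. By Hall's
theorem every `t ∈ T` can thus be given `d + 1` places in `N[t]` so that no vertex is used more than
`d` times. A nonempty `U ⊆ T` provides at most `d |U|` of the `(d + 1) |U|` places given to `U`, so
some place of a `t ∈ U` lies outside `U`: it is the tail of an arc into `t`. Adding such arcs one by
one yields a branching `B` of out-degree at most `d` with head set `T`. Since `d ≤ k`, the arcs
outside `B` have in-degree and fractional arboricity at most `k`, and Frank's theorem splits them
into `k` branchings.

Frank's theorem itself follows by removing one branching at a time; as in Lovász's proof of Edmonds'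
theorem, that branching is grown along arcs inside minimal tight sets.
-/

open Finset Function

section ArcCounts

variable {V A : Type*} [DecidableEq V] {tail head : A → V} {E : Finset A}

/-- The arcs of `E` with both ends in `X`; with `E` the set of all arcs this is the paper's
`A[X]`. -/
def inducedArcs (tail head : A → V) (E : Finset A) (X : Finset V) : Finset A :=
  {a ∈ E | tail a ∈ X ∧ head a ∈ X}

@[simp]
theorem mem_inducedArcs {X : Finset V} {a : A} :
    a ∈ inducedArcs tail head E X ↔ a ∈ E ∧ tail a ∈ X ∧ head a ∈ X :=
  mem_filter

theorem inducedArcs_subset_inducedArcs {E' : Finset A} (h : E' ⊆ E) (X : Finset V) :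
    inducedArcs tail head E' X ⊆ inducedArcs tail head E X :=
  filter_subset_filter _ h

theorem inducedArcs_singleton (hloop : ∀ a ∈ E, tail a ≠ head a) (v : V) :
    inducedArcs tail head E {v} = ∅ := by
  refine filter_eq_empty_iff.2 fun a ha h => hloop a ha ?_
  rw [mem_singleton.1 h.1, mem_singleton.1 h.2]

theorem card_inducedArcs_add_le_inter_add_union (X Y : Finset V) :
    #(inducedArcs tail head E X) + #(inducedArcs tail head E Y) ≤
      #(inducedArcs tail head E (X ∩ Y)) + #(inducedArcs tail head E (X ∪ Y)) := by
  classical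
  rw [← card_inter_add_card_union]
  gcongr <;> intro a <;> simp only [mem_inter, mem_union, mem_inducedArcs] <;> tauto

theorem ncard_setOf_mem_and_ends_mem (E : Finset A) (X : Finset V) :
    {a | a ∈ E ∧ tail a ∈ X ∧ head a ∈ X}.ncard = #(inducedArcs tail head E X) := by
  simp [inducedArcs, ← Set.ncard_coe_finset]

theorem ncard_setOf_mem_and_eq (E : Finset A) (f : A → V) (v : V) :
    {a | a ∈ E ∧ f a = v}.ncard = #{a ∈ E | f a = v} := by
  simp [← Set.ncard_coe_finset]

theorem card_filter_head_mem_le {m : ℕ} {X : Finset V}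
    (h : ∀ v ∈ X, #{a ∈ E | head a = v} ≤ m) : #{a ∈ E | head a ∈ X} ≤ m * #X :=
  card_le_mul_card_image_of_maps_to (fun _ ha => (mem_filter.1 ha).2) m fun v hv =>
    (card_le_card (filter_subset_filter _ (filter_subset _ _))).trans (h v hv)

theorem mul_card_le_card_filter_head_mem {m : ℕ} {X : Finset V}
    (h : ∀ v ∈ X, m ≤ #{a ∈ E | head a = v}) : m * #X ≤ #{a ∈ E | head a ∈ X} :=
  mul_card_image_le_card_of_maps_to (fun _ ha => (mem_filter.1 ha).2) m fun v hv =>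
    (h v hv).trans <| card_le_card fun a ha => by
      obtain ⟨haE, rfl⟩ := mem_filter.1 ha
      simp [haE, hv]

theorem card_filter_head_eq_sdiff_le [DecidableEq A] {B : Finset A} {m : ℕ} {v : V} (hBE : B ⊆ E)
    (hin : #{a ∈ E | head a = v} ≤ m + 1)
    (hB : #{a ∈ E | head a = v} = m + 1 → v ∈ B.image head) :
    #{a ∈ E \ B | head a = v} ≤ m := by
  have hsub : {a ∈ E \ B | head a = v} ⊆ {a ∈ E | head a = v} :=
    filter_subset_filter _ sdiff_subset
  rcases hin.lt_or_eq with hlt | heq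
  · exact (card_le_card hsub).trans (Nat.le_of_lt_succ hlt)
  · obtain ⟨b, hb, hbv⟩ := mem_image.1 (hB heq)
    have hssub : {a ∈ E \ B | head a = v} ⊂ {a ∈ E | head a = v} :=
      (ssubset_iff_of_subset hsub).2 ⟨b, by simp [hBE hb, hbv], by simp [hb]⟩
    exact Nat.le_of_lt_succ ((card_lt_card hssub).trans_eq heq)

/-- The closed in-neighbourhood `N[v]`: the vertex `v` and the tails of the arcs of `E` into it. -/
def closedInNhd (tail head : A → V) (E : Finset A) (v : V) : Finset V :=
  insert v (image tail {a ∈ E | head a = v})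

theorem filter_head_mem_subset_inducedArcs_closedInNhd (S : Finset V) :
    {a ∈ E | head a ∈ S} ⊆ inducedArcs tail head E (S.biUnion (closedInNhd tail head E)) := by
  intro a ha
  obtain ⟨haE, haS⟩ := mem_filter.1 ha
  refine mem_inducedArcs.2 ⟨haE, mem_biUnion.2 ⟨_, haS, ?_⟩, mem_biUnion.2 ⟨_, haS, ?_⟩⟩
  · exact mem_insert_of_mem (mem_image_of_mem tail (mem_filter.2 ⟨haE, rfl⟩))
  · exact mem_insert_self _ _

end ArcCounts

section Branchings

variable {V A : Type*} [DecidableEq V] {tail head : A → V} {B E : Finset A}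

/-- A branching: a finite arc set in which every vertex is the head of at most one arc and every
nonempty vertex set `X` spans at most `|X| - 1` arcs. -/
structure IsBranching (tail head : A → V) (B : Finset A) : Prop where
  injOn_head : Set.InjOn head B
  card_inducedArcs_lt : ∀ X : Finset V, X.Nonempty → #(inducedArcs tail head B X) < #X

namespace IsBranching

theorem empty : IsBranching tail head ∅ where
  injOn_head := by simp
  card_inducedArcs_lt X hX := by simpa [inducedArcs] using hX

theorem insert [DecidableEq A] (hB : IsBranching tail head B) {a : A} (hne : tail a ≠ head a)
    (hfresh : ∀ b ∈ B, tail b ≠ head a ∧ head b ≠ head a) :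
    IsBranching tail head (insert a B) where
  injOn_head := by
    have haB : a ∉ B := fun ha => (hfresh a ha).2 rfl
    rw [coe_insert, Set.injOn_insert (by exact_mod_cast haB)]
    refine ⟨hB.injOn_head, ?_⟩
    rintro ⟨b, hb, hba⟩
    exact (hfresh b hb).2 hba
  card_inducedArcs_lt X hX := by
    by_cases haX : tail a ∈ X ∧ head a ∈ X
    · have hX' : (X.erase (head a)).Nonempty := ⟨tail a, mem_erase.2 ⟨hne, haX.1⟩⟩
      have hsub : inducedArcs tail head (Insert.insert a B) X ⊆
          Insert.insert a (inducedArcs tail head B (X.erase (head a))) := by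
        intro b
        have := hfresh b
        simp only [mem_inducedArcs, mem_insert, mem_erase]
        tauto
      calc #(inducedArcs tail head (Insert.insert a B) X)
          ≤ #(inducedArcs tail head B (X.erase (head a))) + 1 :=
            (card_le_card hsub).trans (card_insert_le _ _)
        _ < #(X.erase (head a)) + 1 := Nat.succ_lt_succ (hB.card_inducedArcs_lt _ hX')
        _ = #X := card_erase_add_one haX.2
    · have hsub : inducedArcs tail head (Insert.insert a B) X = inducedArcs tail head B X :=
        (filter_insert _ _ _).trans (if_neg haX)
      exact hsub ▸ hB.card_inducedArcs_lt X hX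

theorem card_filter_head_eq_le_one (hB : IsBranching tail head B) (v : V) :
    #{a ∈ B | head a = v} ≤ 1 := by
  refine card_le_one.2 fun a ha b hb => ?_
  obtain ⟨haB, rfl⟩ := mem_filter.1 ha
  obtain ⟨hbB, hba⟩ := mem_filter.1 hb
  exact hB.injOn_head haB hbB hba.symm

end IsBranching

/-- An indexed partition of the arc set `E` into branchings, some of which may be empty. -/
structure IsBranchingPartition {k : ℕ} (tail head : A → V) (E : Finset A)
    (F : Fin k → Finset A) : Prop where
  pairwise_disjoint : Pairwise (Disjoint on F)
  mem_iff : ∀ a, a ∈ E ↔ ∃ i, a ∈ F i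
  isBranching : ∀ i, IsBranching tail head (F i)

theorem IsBranchingPartition.snoc [DecidableEq A] {k : ℕ} {F : Fin k → Finset A}
    (hF : IsBranchingPartition tail head (E \ B) F) (hB : IsBranching tail head B) (hBE : B ⊆ E) :
    IsBranchingPartition tail head E (Fin.snoc F B : Fin (k + 1) → Finset A) where
  pairwise_disjoint := by
    have hFB : ∀ i, Disjoint (F i) B := fun i =>
      disjoint_left.2 fun a ha => (mem_sdiff.1 ((hF.mem_iff a).2 ⟨i, ha⟩)).2
    intro i j hij
    induction i using Fin.lastCases <;> induction j using Fin.lastCases <;>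
      simp only [onFun, Fin.snoc_last, Fin.snoc_castSucc]
    · exact absurd rfl hij
    · exact (hFB _).symm
    · exact hFB _
    · exact hF.pairwise_disjoint fun h => hij (congrArg Fin.castSucc h)
  mem_iff a := by
    have haF := hF.mem_iff a
    rw [mem_sdiff] at haF
    have haBE := @hBE a
    simp only [Fin.exists_fin_succ', Fin.snoc_castSucc, Fin.snoc_last, ← haF]
    tauto
  isBranching i := by
    induction i using Fin.lastCases with
    | last => simpa only [Fin.snoc_last] using hB
    | cast i => simpa only [Fin.snoc_castSucc] using hF.isBranching i

-- `U` is the set of vertices still to be treated: each of them is either skipped or reached by an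
-- arc from a treated vertex.
theorem exists_isBranching_of_grow [DecidableEq A] (P : Finset A → Finset V → Prop)
    (hgrow : ∀ F U, P F U → U.Nonempty → (∃ v ∈ U, P F (U.erase v)) ∨
      ∃ a, head a ∈ U ∧ tail a ∉ U ∧ P (insert a F) (U.erase (head a)))
    {F : Finset A} {U : Finset V} (hF : IsBranching tail head F)
    (hFU : ∀ b ∈ F, tail b ∉ U ∧ head b ∉ U) (hP : P F U) :
    ∃ B, IsBranching tail head B ∧ P B ∅ := by
  induction U using Finset.strongInduction generalizing F with
  | H U ih =>
    rcases U.eq_empty_or_nonempty with rfl | hU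
    · exact ⟨F, hF, hP⟩
    rcases hgrow F U hP hU with ⟨v, hv, hPv⟩ | ⟨a, hhead, htail, hPa⟩
    · exact ih _ (erase_ssubset hv) hF
        (fun b hb => (hFU b hb).imp (mt mem_of_mem_erase) (mt mem_of_mem_erase)) hPv
    · have hfresh : ∀ b ∈ F, tail b ≠ head a ∧ head b ≠ head a := fun b hb =>
        ⟨fun h => (hFU b hb).1 (h ▸ hhead), fun h => (hFU b hb).2 (h ▸ hhead)⟩
      refine ih _ (erase_ssubset hhead)
        (hF.insert (fun h => htail (h ▸ hhead)) hfresh) (fun b hb => ?_) hPa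
      rcases mem_insert.1 hb with rfl | hb
      · exact ⟨mt mem_of_mem_erase htail, notMem_erase _ _⟩
      · exact (hFU b hb).imp (mt mem_of_mem_erase) (mt mem_of_mem_erase)

end Branchings

section Frank

variable {V A : Type*} [DecidableEq V] {tail head : A → V} {k : ℕ} {U : Finset V} {E : Finset A}

/-- The invariant of Frank's theorem while a branching is being removed from an arc set with
in-degrees and fractional arboricity at most `k + 1`: `E` consists of the remaining arcs and `U` of
the vertices not yet treated. For `U = ∅` it says that in-degrees and fractional arboricity are at
most `k`. -/
structure IsResidual (tail head : A → V) (k : ℕ) (U : Finset V) (E : Finset A) : Prop where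
  card_inducedArcs_add_le : ∀ X : Finset V, X.Nonempty →
    #(inducedArcs tail head E X) + k ≤ k * #X + #(X ∩ U)
  card_inducedArcs_add_le_of_subset : ∀ X ⊆ U, X.Nonempty →
    #(inducedArcs tail head E X) + (k + 1) ≤ (k + 1) * #X
  card_head_eq_le : ∀ v, #{a ∈ E | head a = v} ≤ k + 1
  card_head_eq_le_of_notMem : ∀ v ∉ U, #{a ∈ E | head a = v} ≤ k

/-- A vertex set meeting `U` that attains equality in `IsResidual.card_inducedArcs_add_le`: an arc
into `X ∩ U` from outside `X` cannot be removed. Only the inequality missing from `IsResidual` is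
recorded. -/
structure IsTight (tail head : A → V) (k : ℕ) (U : Finset V) (E : Finset A) (X : Finset V) :
    Prop where
  inter_nonempty : (X ∩ U).Nonempty
  card_le : k * #X + #(X ∩ U) ≤ #(inducedArcs tail head E X) + k

namespace IsResidual

theorem isTight_inter (hE : IsResidual tail head k U E) {X Y : Finset V}
    (hX : IsTight tail head k U E X) (hY : IsTight tail head k U E Y)
    (hXY : (X ∩ Y ∩ U).Nonempty) : IsTight tail head k U E (X ∩ Y) where
  inter_nonempty := hXY
  card_le := by
    have hsuper :=
      card_inducedArcs_add_le_inter_add_union (tail := tail) (head := head) (E := E) X Y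
    have hunion := hE.card_inducedArcs_add_le (X ∪ Y)
      ((hX.inter_nonempty.mono inter_subset_left).mono subset_union_left)
    have hmul : k * #(X ∪ Y) + k * #(X ∩ Y) = k * #X + k * #Y := by
      rw [← mul_add, card_union_add_card_inter, mul_add]
    have hmodular : #((X ∪ Y) ∩ U) + #(X ∩ Y ∩ U) = #(X ∩ U) + #(Y ∩ U) := by
      rw [union_inter_distrib_right, inter_inter_distrib_right, card_union_add_card_inter]
    have hXle := hX.card_le
    have hYle := hY.card_le
    omega

theorem exists_arc_of_isTight (hE : IsResidual tail head k U E) {X : Finset V}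
    (hX : IsTight tail head k U E X) :
    ∃ a ∈ E, head a ∈ X ∩ U ∧ tail a ∈ X ∧ tail a ∉ U := by
  classical
  by_contra! hnone
  have hsub : inducedArcs tail head E X ⊆
      inducedArcs tail head E (X ∩ U) ∪ {a ∈ E | head a ∈ X \ U} := by
    intro a
    have := hnone a
    simp only [mem_inducedArcs, mem_union, mem_filter, mem_inter, mem_sdiff] at this ⊢
    tauto
  have hcard := (card_le_card hsub).trans (card_union_le _ _)
  have hinner := hE.card_inducedArcs_add_le_of_subset _ inter_subset_right hX.inter_nonempty
  have houter : #{a ∈ E | head a ∈ X \ U} ≤ k * #(X \ U) :=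
    card_filter_head_mem_le fun v hv => hE.card_head_eq_le_of_notMem v (mem_sdiff.1 hv).2
  have hsplit : k * #X = k * #(X ∩ U) + k * #(X \ U) := by
    rw [← mul_add, card_inter_add_card_sdiff]
  have htight := hX.card_le
  rw [add_one_mul] at hinner
  omega

theorem exists_arc_of_le_card_head_eq (hE : IsResidual tail head k U E) (hU : U.Nonempty)
    (hin : ∀ v ∈ U, k + 1 ≤ #{a ∈ E | head a = v}) :
    ∃ a ∈ E, head a ∈ U ∧ tail a ∉ U := by
  have hheads := mul_card_le_card_filter_head_mem hin
  have hinner := hE.card_inducedArcs_add_le_of_subset U subset_rfl hU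
  obtain ⟨a, ha, ha'⟩ := exists_mem_notMem_of_card_lt_card
    (show #(inducedArcs tail head E U) < #{a ∈ E | head a ∈ U} by omega)
  obtain ⟨haE, haU⟩ := mem_filter.1 ha
  exact ⟨a, haE, haU, fun htail => ha' (mem_inducedArcs.2 ⟨haE, htail, haU⟩)⟩

theorem erase_of_subset (hE : IsResidual tail head k U E) {E' : Finset A} (hE' : E' ⊆ E) {v : V}
    (hin : #{a ∈ E' | head a = v} ≤ k)
    (htight : ∀ X, IsTight tail head k U E X → v ∈ X →
      #(inducedArcs tail head E' X) < #(inducedArcs tail head E X)) :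
    IsResidual tail head k (U.erase v) E' where
  card_inducedArcs_add_le X hX := by
    have hle := hE.card_inducedArcs_add_le X hX
    have hmono := card_le_card (inducedArcs_subset_inducedArcs (tail := tail) (head := head) hE' X)
    rw [inter_erase]
    by_cases hv : v ∈ X ∩ U
    · have hcard := card_erase_add_one hv
      by_cases hX' : IsTight tail head k U E X
      · have := htight X hX' (mem_inter.1 hv).1
        omega
      · have : ¬k * #X + #(X ∩ U) ≤ #(inducedArcs tail head E X) + k :=
          fun h => hX' ⟨⟨v, hv⟩, h⟩
        omega
    · rw [erase_eq_of_notMem hv]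
      omega
  card_inducedArcs_add_le_of_subset X hXU hX :=
    (Nat.add_le_add_right (card_le_card (inducedArcs_subset_inducedArcs hE' X)) _).trans
      (hE.card_inducedArcs_add_le_of_subset X (hXU.trans (erase_subset _ _)) hX)
  card_head_eq_le w :=
    (card_le_card (filter_subset_filter _ hE')).trans (hE.card_head_eq_le w)
  card_head_eq_le_of_notMem w hw := by
    rcases eq_or_ne w v with rfl | hne
    · exact hin
    · exact (card_le_card (filter_subset_filter _ hE')).trans
        (hE.card_head_eq_le_of_notMem w fun hwU => hw (mem_erase.2 ⟨hne, hwU⟩))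

theorem erase_arc [DecidableEq A] (hE : IsResidual tail head k U E) {a : A} (haE : a ∈ E)
    (htight : ∀ X, IsTight tail head k U E X → head a ∈ X → tail a ∈ X) :
    IsResidual tail head k (U.erase (head a)) (E.erase a) := by
  refine hE.erase_of_subset (erase_subset a E) ?_ fun X hX haX => card_lt_card ?_
  · rw [erase_eq]
    exact card_filter_head_eq_sdiff_le (singleton_subset_iff.2 haE) (hE.card_head_eq_le _)
      fun _ => by simp
  · exact (ssubset_iff_of_subset (inducedArcs_subset_inducedArcs (erase_subset a E) X)).2
      ⟨a, mem_inducedArcs.2 ⟨haE, htight X hX haX, haX⟩, by simp⟩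

theorem exists_erase [DecidableEq A] (hE : IsResidual tail head k U E) (hU : U.Nonempty) :
    (∃ v ∈ U, IsResidual tail head k (U.erase v) E) ∨
      ∃ a ∈ E, head a ∈ U ∧ tail a ∉ U ∧
        IsResidual tail head k (U.erase (head a)) (E.erase a) := by
  by_cases hex : ∃ X, IsTight tail head k U E X
  · obtain ⟨X, hX, hmin⟩ := exists_minimal_of_wellFoundedLT _ hex
    obtain ⟨a, haE, hhead, htailX, htailU⟩ := hE.exists_arc_of_isTight hX
    obtain ⟨hheadX, hheadU⟩ := mem_inter.1 hhead
    refine .inr ⟨a, haE, hheadU, htailU, hE.erase_arc haE fun Y hY hheadY => ?_⟩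
    have hXY : IsTight tail head k U E (X ∩ Y) :=
      hE.isTight_inter hX hY ⟨head a, by simp [hheadX, hheadY, hheadU]⟩
    exact (mem_inter.1 (hmin hXY inter_subset_left htailX)).2
  · by_cases hlow : ∃ v ∈ U, #{a ∈ E | head a = v} ≤ k
    · obtain ⟨v, hvU, hv⟩ := hlow
      exact .inl ⟨v, hvU, hE.erase_of_subset subset_rfl hv fun X hX => (hex ⟨X, hX⟩).elim⟩
    · push Not at hlow
      obtain ⟨a, haE, hhead, htail⟩ := hE.exists_arc_of_le_card_head_eq hU hlow
      exact .inr ⟨a, haE, hhead, htail, hE.erase_arc haE fun X hX => (hex ⟨X, hX⟩).elim⟩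

theorem exists_isBranching_sdiff [DecidableEq A] (hE : IsResidual tail head k U E) :
    ∃ B ⊆ E, IsBranching tail head B ∧ IsResidual tail head k ∅ (E \ B) := by
  let P (F : Finset A) (U : Finset V) : Prop := F ⊆ E ∧ IsResidual tail head k U (E \ F)
  have hgrow : ∀ F U, P F U → U.Nonempty → (∃ v ∈ U, P F (U.erase v)) ∨
      ∃ a, head a ∈ U ∧ tail a ∉ U ∧ P (insert a F) (U.erase (head a)) := by
    rintro F U ⟨hFE, hF⟩ hU
    refine (hF.exists_erase hU).imp (fun ⟨v, hv, hres⟩ => ⟨v, hv, hFE, hres⟩) ?_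
    rintro ⟨a, haE, hhead, htail, hres⟩
    refine ⟨a, hhead, htail, insert_subset (mem_sdiff.1 haE).1 hFE, ?_⟩
    rwa [sdiff_insert]
  obtain ⟨B, hB, hBE, hres⟩ := exists_isBranching_of_grow P hgrow .empty (by simp)
    ⟨empty_subset E, by rwa [sdiff_empty]⟩
  exact ⟨B, hBE, hB, hres⟩

end IsResidual

/-- **Frank's theorem**. -/
theorem exists_isBranchingPartition [Finite V] (hin : ∀ v, #{a ∈ E | head a = v} ≤ k)
    (hγ : ∀ X : Finset V, X.Nonempty → #(inducedArcs tail head E X) + k ≤ k * #X) :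
    ∃ F : Fin k → Finset A, IsBranchingPartition tail head E F := by
  classical
  have := Fintype.ofFinite V
  induction k generalizing E with
  | zero =>
    have hE : E = ∅ := eq_empty_of_forall_notMem fun a ha =>
      (card_pos.2 ⟨a, by simp [ha]⟩).not_ge (hin (head a))
    exact ⟨fun _ => ∅, fun i => i.elim0, by simp [hE], fun i => i.elim0⟩
  | succ k ih =>
    have hres : IsResidual tail head k univ E :=
      { card_inducedArcs_add_le := fun X hX => by
          have := hγ X hX
          rw [add_one_mul] at this
          rw [inter_univ]
          omega
        card_inducedArcs_add_le_of_subset := fun X _ hX => hγ X hX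
        card_head_eq_le := hin
        card_head_eq_le_of_notMem := fun v hv => absurd (mem_univ v) hv }
    obtain ⟨B, hBE, hB, hres'⟩ := hres.exists_isBranching_sdiff
    obtain ⟨F, hF⟩ := ih (fun v => hres'.card_head_eq_le_of_notMem v (notMem_empty v))
      fun X hX => by simpa using hres'.card_inducedArcs_add_le X hX
    exact ⟨_, hF.snoc hB hBE⟩

end Frank

section BoundedOutDegree

theorem exists_injective_of_mul_card_le_mul_card_biUnion {ι α : Type*} [DecidableEq α]
    (N : ι → Finset α) (m n : ℕ) (hN : ∀ S : Finset ι, m * #S ≤ n * #(S.biUnion N)) :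
    ∃ f : ι × Fin m → α × Fin n, Injective f ∧ ∀ p, (f p).1 ∈ N p.1 := by
  classical
  suffices hall : ∀ P : Finset (ι × Fin m),
      #P ≤ #(P.biUnion fun p => N p.1 ×ˢ (univ : Finset (Fin n))) by
    obtain ⟨f, hf, hfN⟩ := (all_card_le_biUnion_card_iff_exists_injective _).1 hall
    exact ⟨f, hf, fun p => (mem_product.1 (hfN p)).1⟩
  intro P
  have hP : P ⊆ P.image Prod.fst ×ˢ univ := fun p hp =>
    mem_product.2 ⟨mem_image_of_mem _ hp, mem_univ _⟩
  have hbiUnion : (P.biUnion fun p => N p.1 ×ˢ (univ : Finset (Fin n))) =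
      (P.image Prod.fst).biUnion N ×ˢ univ := by
    ext x
    simp
  calc #P ≤ m * #(P.image Prod.fst) := by
        simpa [card_product, mul_comm] using card_le_card hP
    _ ≤ n * #((P.image Prod.fst).biUnion N) := hN _
    _ = _ := by rw [hbiUnion, card_product, card_univ, Fintype.card_fin, mul_comm]

theorem exists_fst_notMem_of_mul_card_lt {ι α : Type*} {m n : ℕ} {f : ι × Fin m → α × Fin n}
    (hf : Injective f) {S : Finset ι} {W : Finset α} (h : n * #W < m * #S) :
    ∃ p, p.1 ∈ S ∧ (f p).1 ∉ W := by
  by_contra! hW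
  have hle : #(S ×ˢ (univ : Finset (Fin m))) ≤ #(W ×ˢ (univ : Finset (Fin n))) :=
    card_le_card_of_injOn f
      (fun p hp => mem_coe.2 (mem_product.2 ⟨hW p (mem_product.1 hp).1, mem_univ _⟩)) hf.injOn
  simp only [card_product, card_univ, Fintype.card_fin] at hle
  linarith

variable {V A : Type*} [DecidableEq V] {tail head : A → V} {E : Finset A} {d : ℕ} {T : Finset V}

theorem exists_arc_of_injective {f : T × Fin (d + 1) → V × Fin d} (hf : Injective f)
    (hfN : ∀ p, (f p).1 ∈ closedInNhd tail head E p.1) {U : Finset V} (hUT : U ⊆ T)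
    (hU : U.Nonempty) :
    ∃ a ∈ E, head a ∈ U ∧ tail a ∉ U ∧ ∃ p, (p.1 : V) = head a ∧ (f p).1 = tail a := by
  obtain ⟨p, hp, hfp⟩ : ∃ p, p.1 ∈ U.subtype (· ∈ T) ∧ (f p).1 ∉ U := by
    refine exists_fst_notMem_of_mul_card_lt hf ?_
    rw [card_subtype, filter_true_of_mem hUT]
    exact Nat.mul_lt_mul_of_pos_right d.lt_succ_self hU.card_pos
  have hpU : (p.1 : V) ∈ U := mem_subtype.1 hp
  rcases mem_insert.1 (hfN p) with heq | hmem
  · exact absurd (heq ▸ hpU) hfp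
  · obtain ⟨a, ha, htail⟩ := mem_image.1 hmem
    obtain ⟨haE, hhead⟩ := mem_filter.1 ha
    exact ⟨a, haE, hhead ▸ hpU, htail ▸ hfp, p, hhead.symm, htail.symm⟩

theorem exists_isBranching_of_injective {f : T × Fin (d + 1) → V × Fin d} (hf : Injective f)
    (hfN : ∀ p, (f p).1 ∈ closedInNhd tail head E p.1) :
    ∃ B ⊆ E, IsBranching tail head B ∧ T ⊆ B.image head ∧
      ∀ a ∈ B, ∃ p, (p.1 : V) = head a ∧ (f p).1 = tail a := by
  classical
  let P (F : Finset A) (U : Finset V) : Prop := U ⊆ T ∧ T ⊆ U ∪ F.image head ∧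
    ∀ a ∈ F, a ∈ E ∧ ∃ p, (p.1 : V) = head a ∧ (f p).1 = tail a
  have hgrow : ∀ F U, P F U → U.Nonempty → (∃ v ∈ U, P F (U.erase v)) ∨
      ∃ a, head a ∈ U ∧ tail a ∉ U ∧ P (insert a F) (U.erase (head a)) := by
    rintro F U ⟨hUT, hTU, hF⟩ hU
    obtain ⟨a, haE, hhead, htail, hp⟩ := exists_arc_of_injective hf hfN hUT hU
    have hT : T ⊆ U.erase (head a) ∪ (insert a F).image head := by
      rwa [image_insert, union_insert, ← insert_union, insert_erase hhead]
    exact .inr ⟨a, hhead, htail, (erase_subset _ _).trans hUT, hT,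
      (forall_mem_insert _ _ _).2 ⟨⟨haE, hp⟩, hF⟩⟩
  obtain ⟨B, hB, -, hT, hBE⟩ :=
    exists_isBranching_of_grow P hgrow .empty (U := T) (by simp) (by simp [P])
  exact ⟨B, fun a ha => (hBE a ha).1, hB, by simpa using hT, fun a ha => (hBE a ha).2⟩

theorem card_filter_tail_eq_le_of_injective {m : ℕ} {f : T × Fin m → V × Fin d} {B : Finset A}
    (hf : Injective f) (hB : Set.InjOn head B)
    (hfB : ∀ a ∈ B, ∃ p, (p.1 : V) = head a ∧ (f p).1 = tail a) (v : V) :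
    #{a ∈ B | tail a = v} ≤ d := by
  suffices hle : #{a ∈ B | tail a = v} ≤ #(univ : Finset (Fin d)) by simpa using hle
  refine card_le_card_of_forall_subsingleton
    (fun a c => ∃ p, (p.1 : V) = head a ∧ f p = (v, c)) ?_ ?_
  · intro a ha
    obtain ⟨haB, rfl⟩ := mem_filter.1 ha
    obtain ⟨p, hp, hfp⟩ := hfB a haB
    exact ⟨(f p).2, mem_univ _, p, hp, Prod.ext hfp rfl⟩
  · rintro c - a ⟨ha, p, hp, hfp⟩ b ⟨hb, q, hq, hfq⟩
    have hpq : p = q := hf (hfp.trans hfq.symm)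
    exact hB (mem_filter.1 ha).1 (mem_filter.1 hb).1 (by rw [← hp, ← hq, hpq])

theorem exists_isBranching_card_tail_eq_le
    (hT : ∀ S ⊆ T, (d + 1) * #S ≤ d * #(S.biUnion (closedInNhd tail head E))) :
    ∃ B ⊆ E, IsBranching tail head B ∧ T ⊆ B.image head ∧ ∀ v, #{a ∈ B | tail a = v} ≤ d := by
  classical
  obtain ⟨f, hf, hfN⟩ := exists_injective_of_mul_card_le_mul_card_biUnion
    (fun t : T => closedInNhd tail head E t) (d + 1) d fun S => by
      simpa [map_eq_image, image_biUnion, card_image_of_injective _ Subtype.val_injective] using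
        hT (S.map (Embedding.subtype _)) (map_subtype_subset S)
  obtain ⟨B, hBE, hB, hTB, hfB⟩ := exists_isBranching_of_injective hf hfN
  exact ⟨B, hBE, hB, hTB, card_filter_tail_eq_le_of_injective hf hB.injOn_head hfB⟩

theorem mul_card_le_mul_card_biUnion_closedInNhd {m : ℕ} (hm : 0 < m)
    (hγ : ∀ X : Finset V, (d + 1) * #(inducedArcs tail head E X) ≤ d * m * #X)
    {S : Finset V} (hS : ∀ v ∈ S, m ≤ #{a ∈ E | head a = v}) :
    (d + 1) * #S ≤ d * #(S.biUnion (closedInNhd tail head E)) := by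
  set X := S.biUnion (closedInNhd tail head E)
  have hSX : m * #S ≤ #(inducedArcs tail head E X) :=
    (mul_card_le_card_filter_head_mem hS).trans
      (card_le_card (filter_head_mem_subset_inducedArcs_closedInNhd S))
  refine Nat.le_of_mul_le_mul_left ?_ hm
  calc m * ((d + 1) * #S) = (d + 1) * (m * #S) := by ring
    _ ≤ (d + 1) * #(inducedArcs tail head E X) := Nat.mul_le_mul_left _ hSX
    _ ≤ d * m * #X := hγ X
    _ = m * (d * #X) := by ring

end BoundedOutDegree

theorem exists_isBranchingPartition_card_tail_eq_le {V A : Type*} [Finite V] [DecidableEq V]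
    {tail head : A → V} {E : Finset A} {k d : ℕ} (hdk : d ≤ k)
    (hin : ∀ v, #{a ∈ E | head a = v} ≤ k + 1)
    (hγ : ∀ X : Finset V, X.Nonempty →
      (d + 1) * #(inducedArcs tail head E X) ≤ d * (k + 1) * (#X - 1)) :
    ∃ F : Fin (k + 1) → Finset A, IsBranchingPartition tail head E F ∧
      ∀ v, #{a ∈ F (Fin.last k) | tail a = v} ≤ d := by
  classical
  have := Fintype.ofFinite V
  have hγ' : ∀ X : Finset V, (d + 1) * #(inducedArcs tail head E X) ≤ d * (k + 1) * #X := by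
    intro X
    rcases X.eq_empty_or_nonempty with rfl | hX
    · simp [inducedArcs]
    · exact (hγ X hX).trans (Nat.mul_le_mul_left _ (Nat.sub_le _ _))
  obtain ⟨B, hBE, hB, hTB, hBd⟩ := exists_isBranching_card_tail_eq_le
    (T := {v | #{a ∈ E | head a = v} = k + 1}) fun S hST =>
      mul_card_le_mul_card_biUnion_closedInNhd k.succ_pos hγ' fun v hv =>
        (mem_filter.1 (hST hv)).2.ge
  have hin' : ∀ v, #{a ∈ E \ B | head a = v} ≤ k := fun v =>
    card_filter_head_eq_sdiff_le hBE (hin v) fun hv => hTB (mem_filter.2 ⟨mem_univ v, hv⟩)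
  have hsparse : ∀ X : Finset V, X.Nonempty →
      #(inducedArcs tail head (E \ B) X) + k ≤ k * #X := by
    intro X hX
    have hle : #(inducedArcs tail head E X) ≤ k * (#X - 1) := by
      refine Nat.le_of_mul_le_mul_left ((hγ X hX).trans ?_) d.succ_pos
      rw [← mul_assoc]
      exact Nat.mul_le_mul_right _ (by nlinarith)
    calc #(inducedArcs tail head (E \ B) X) + k ≤ k * (#X - 1) + k :=
          Nat.add_le_add_right
            ((card_le_card (inducedArcs_subset_inducedArcs sdiff_subset X)).trans hle) k
      _ = k * #X := by rw [← Nat.mul_succ, Nat.succ_eq_add_one, Nat.sub_add_cancel hX.card_pos]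
  obtain ⟨F, hF⟩ := exists_isBranchingPartition hin' hsparse
  exact ⟨_, hF.snoc hB hBE, by simpa only [Fin.snoc_last] using hBd⟩

/-- digraph with `Δ⁻ ≤ k+1` and fractional arboricity at most
`k + (d-k)/(d+1)` (with `d ≤ k`) decomposes into `k+1` branchings, the last
having out-degree at most `d` everywhere. -/
theorem stmt0 {V A : Type} [Fintype V] [Fintype A]
    (tail head : A → V) (hloop : ∀ a : A, tail a ≠ head a)
    (k d : ℕ) (hk : 0 < k) (hd : 0 < d) (hdk : d ≤ k)
    (hin : ∀ v : V, {a : A | head a = v}.ncard ≤ k + 1)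
    (hγ : ∀ X : Set V, 2 ≤ X.ncard →
      (d + 1) * {a : A | tail a ∈ X ∧ head a ∈ X}.ncard ≤ d * (k + 1) * (X.ncard - 1)) :
    ∃ B : Fin (k + 1) → Set A,
      (∀ i j, i ≠ j → Disjoint (B i) (B j)) ∧
      (⋃ i, B i) = Set.univ ∧
      (∀ i,
        (∀ v : V, {a : A | a ∈ B i ∧ head a = v}.ncard ≤ 1) ∧
        (∀ X : Set V, X.Nonempty →
          {a : A | a ∈ B i ∧ tail a ∈ X ∧ head a ∈ X}.ncard ≤ X.ncard - 1)) ∧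
      (∀ v : V, {a : A | a ∈ B (Fin.last k) ∧ tail a = v}.ncard ≤ d) := by
  classical
  have hin' : ∀ v, #{a | head a = v} ≤ k + 1 := fun v => by
    simpa [← Set.ncard_coe_finset] using hin v
  have hγ' : ∀ X : Finset V, X.Nonempty →
      (d + 1) * #(inducedArcs tail head univ X) ≤ d * (k + 1) * (#X - 1) := by
    intro X hX
    rcases (one_le_card.2 hX).eq_or_lt with hone | htwo
    · obtain ⟨v, rfl⟩ := card_eq_one.1 hone.symm
      simp [inducedArcs_singleton fun a _ => hloop a]
    · simpa [← ncard_setOf_mem_and_ends_mem] using hγ X (by rwa [Set.ncard_coe_finset])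
  obtain ⟨F, hF, hFd⟩ := exists_isBranchingPartition_card_tail_eq_le hdk hin' hγ'
  refine ⟨fun i => F i, fun i j hij => disjoint_coe.2 (hF.pairwise_disjoint hij),
    Set.eq_univ_of_forall fun a => Set.mem_iUnion.2 ((hF.mem_iff a).1 (mem_univ a)),
    fun i => ⟨fun v => ?_, fun X hX => ?_⟩, fun v => ?_⟩
  · exact (ncard_setOf_mem_and_eq _ _ v).trans_le
      ((hF.isBranching i).card_filter_head_eq_le_one v)
  · lift X to Finset V using X.toFinite
    rw [Set.ncard_coe_finset]
    exact (ncard_setOf_mem_and_ends_mem _ X).trans_le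
      (Nat.le_sub_one_of_lt ((hF.isBranching i).card_inducedArcs_lt X hX))
  · exact (ncard_setOf_mem_and_eq _ _ v).trans_le (hFd v)
end

section
/- Let k and d be positive integers. Let D = (V, A) be a digraph such that Δ⁻(D) ≤ k+1 and (1/2)·mad(D) ≤ k + (d−k)/(d+1), i.e. (d+1)·|A[X]| ≤ d(k+1)·|X| for every nonempty X ⊆ V. Then A can be partitioned into k+1 pseudo-branchings C₁, …, C_k, C_{k+1} such that Δ⁺(C_{k+1}) ≤ d, i.e. every vertex is the tail of at most d arcs of C_{k+1}. -/
/-!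
Call a vertex full if its in-degree exceeds `k`. It suffices to pick one entering arc at every full
vertex so that no vertex is the tail of more than `d` picked arcs: the picked arcs form the last
pseudo-branching, and the remaining in-degrees are at most `k`, so the remaining arcs split into
`k` pseudo-branchings by distributing the arcs at each head separately.

The picking is a Hall problem in which every tail has capacity `d`. If `S` is a finite set of full
vertices and `N` is the set of tails of the arcs entering `S`, then all of the at least
`(k + 1) * |S|` arcs entering `S` lie inside `S ∪ N`, so the density bound gives
`(d + 1) * (k + 1) * |S| ≤ d * (k + 1) * (|S| + |N|)`, that is, `|S| ≤ d * |N|`.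
-/

open Set Function

section Fibers

variable {ι α β γ : Type*}

theorem exists_mem_forall_encard_fiber_le {d : ℕ} {N : ι → Set α} (hfin : ∀ i, (N i).Finite)
    (hall : ∀ S : Finset ι, (S.card : ℕ∞) ≤ d * (⋃ i ∈ S, N i).encard) :
    ∃ f : ι → α, (∀ i, f i ∈ N i) ∧ ∀ x, (f ⁻¹' {x}).encard ≤ d := by
  classical
  -- Replace every `x : α` by `d` copies of itself and apply the marriage theorem.
  let copies (i : ι) : Finset (α × Fin d) := (hfin i).toFinset ×ˢ Finset.univ
  have hall_copies (S : Finset ι) : S.card ≤ (S.biUnion copies).card := by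
    have hcopies : (S.biUnion copies : Set (α × Fin d)) = (⋃ i ∈ S, N i) ×ˢ univ := by
      ext x
      simp [copies]
    rw [← Nat.cast_le (α := ℕ∞), ← encard_coe_eq_coe_finsetCard (S.biUnion copies), hcopies,
      encard_prod, encard_univ, ENat.card_eq_coe_fintype_card, Fintype.card_fin, mul_comm]
    exact hall S
  obtain ⟨g, hg, hmem⟩ :=
    (Finset.all_card_le_biUnion_card_iff_exists_injective copies).1 hall_copies
  refine ⟨fun i => (g i).1, fun i => ?_, fun x => ?_⟩
  · exact (hfin i).mem_toFinset.1 (Finset.mem_product.1 (hmem i)).1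
  · have hinj : InjOn (fun i => (g i).2) ((fun i => (g i).1) ⁻¹' {x}) := fun i hi j hj hij =>
      hg (Prod.ext (Eq.trans hi (Eq.symm hj)) hij)
    simpa using encard_le_encard_of_injOn (mapsTo_univ _ _) hinj

theorem card_mul_le_encard_preimage {f : α → β} {m : ℕ∞} {S : Finset β}
    (hf : ∀ b ∈ S, m ≤ (f ⁻¹' {b}).encard) :
    S.card * m ≤ (f ⁻¹' S).encard := by
  have hfibers : f ⁻¹' S = ⋃ b ∈ (S : Set β), f ⁻¹' {b} := by
    rw [← preimage_iUnion₂, biUnion_of_singleton]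
  rw [hfibers, S.finite_toSet.encard_biUnion (pairwiseDisjoint_fiber f _),
    finsum_mem_coe_finset, ← nsmul_eq_mul]
  exact S.card_nsmul_le_sum _ _ hf

theorem exists_fin_coloring_injOn {f : α → β} {k : ℕ} (hf : ∀ b, (f ⁻¹' {b}).encard ≤ k) :
    ∃ c : α → Fin k, ∀ i, InjOn f (c ⁻¹' {i}) := by
  have hemb (b : β) : Nonempty (f ⁻¹' {b} ↪ Fin k) := by
    have := (finite_of_encard_le_coe (hf b)).fintype
    refine Embedding.nonempty_of_card_le ?_
    rw [Fintype.card_fin, ← Nat.cast_le (α := ℕ∞), coe_fintypeCard]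
    exact hf b
  let e (b : β) : f ⁻¹' {b} ↪ Fin k := (hemb b).some
  have he : ∀ b b' (x : f ⁻¹' {b}) (y : f ⁻¹' {b'}), b = b' → e b x = e b' y → (x : α) = y := by
    rintro b _ x y rfl hxy
    exact congrArg Subtype.val ((e b).injective hxy)
  exact ⟨fun a => e (f a) ⟨a, rfl⟩, fun i a ha a' ha' haa' =>
    he _ _ ⟨a, rfl⟩ ⟨a', rfl⟩ haa' (Eq.trans ha (Eq.symm ha'))⟩

theorem exists_bijOn_forall_encard_inter_fiber_le {f : α → β} {g : α → γ} {U : Set β} {d : ℕ}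
    (hfin : ∀ b ∈ U, (f ⁻¹' {b}).Finite)
    (hall : ∀ S : Finset β, ↑S ⊆ U → (S.card : ℕ∞) ≤ d * (g '' (f ⁻¹' S)).encard) :
    ∃ F : Set α, BijOn f F U ∧ ∀ x, (F ∩ g ⁻¹' {x}).encard ≤ d := by
  have hall' (S : Finset U) : (S.card : ℕ∞) ≤ d * (⋃ b ∈ S, g '' (f ⁻¹' {(b : β)})).encard := by
    have himage : ⋃ b ∈ S, g '' (f ⁻¹' {(b : β)}) =
        g '' (f ⁻¹' (S.map (Embedding.subtype (· ∈ U)) : Finset β)) := by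
      ext x
      simp
    rw [himage, ← S.card_map (Embedding.subtype (· ∈ U))]
    refine hall _ fun b hb => ?_
    obtain ⟨b, -, rfl⟩ := Finset.mem_map.1 hb
    exact b.2
  obtain ⟨t, ht, htd⟩ :=
    exists_mem_forall_encard_fiber_le (fun b : U => (hfin b b.2).image g) hall'
  choose pick hpick hgpick using ht
  replace hpick (b : U) : f (pick b) = b := hpick b
  refine ⟨range pick, ⟨?_, ?_, ?_⟩, fun x => ?_⟩
  · rintro _ ⟨b, rfl⟩
    exact hpick b ▸ b.2
  · rintro _ ⟨b, rfl⟩ _ ⟨b', rfl⟩ hbb'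
    rw [hpick, hpick] at hbb'
    exact congrArg pick (Subtype.ext hbb')
  · exact fun b hb => ⟨pick ⟨b, hb⟩, mem_range_self _, hpick ⟨b, hb⟩⟩
  · have hsub : range pick ∩ g ⁻¹' {x} ⊆ pick '' (t ⁻¹' {x}) := by
      rintro _ ⟨⟨b, rfl⟩, hx⟩
      exact ⟨b, (hgpick b).symm.trans hx, rfl⟩
    exact (encard_le_encard hsub).trans ((encard_image_le _ _).trans (htd x))

theorem encard_compl_inter_fiber_le {f : α → β} {F : Set α} {k : ℕ}
    (hf : ∀ b, (f ⁻¹' {b}).encard ≤ k + 1)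
    (hF : {b | k + 1 ≤ (f ⁻¹' {b}).encard} ⊆ f '' F) (b : β) :
    (Fᶜ ∩ f ⁻¹' {b}).encard ≤ k := by
  by_cases hb : k + 1 ≤ (f ⁻¹' {b}).encard
  · obtain ⟨a, haF, rfl⟩ := hF hb
    have hsub : insert a (Fᶜ ∩ f ⁻¹' {f a}) ⊆ f ⁻¹' {f a} :=
      insert_subset rfl inter_subset_right
    have hle := (encard_le_encard hsub).trans (hf _)
    rw [encard_insert_of_notMem fun ha => ha.1 haF] at hle
    exact (ENat.add_le_add_iff_right ENat.one_ne_top).1 hle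
  · exact (encard_le_encard inter_subset_right).trans (Order.le_of_lt_add_one (not_le.1 hb))

theorem pairwise_disjoint_snoc {n : ℕ} {C : Fin n → Set α} {s : Set α}
    (hC : Pairwise (Disjoint on C)) (hCs : ∀ i, Disjoint (C i) s) :
    Pairwise (Disjoint on (Fin.snoc C s : Fin (n + 1) → Set α)) := by
  intro i j hij
  induction i using Fin.lastCases with
  | last =>
    induction j using Fin.lastCases with
    | last => exact absurd rfl hij
    | cast j => simpa [onFun] using (hCs j).symm
  | cast i =>
    induction j using Fin.lastCases with
    | last => simpa [onFun] using hCs i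
    | cast j => simpa [onFun] using hC (ne_of_apply_ne Fin.castSucc hij)

end Fibers

section Digraph

variable {V A : Type*} {tail head : A → V} {k d : ℕ}

/-- A pseudo-branching, the kind of part into which the arcs of a digraph are to be partitioned:
every vertex is the head of at most one arc of `C`, which is encoded as injectivity of `head` on
`C`. The tails play no role, so only the head map of the digraph is a parameter. -/
def IsPseudoBranching (head : A → V) (C : Set A) : Prop :=
  InjOn head C

theorem IsPseudoBranching.encard_inter_fiber_le_one {C : Set A} (hC : IsPseudoBranching head C)
    (v : V) : (C ∩ head ⁻¹' {v}).encard ≤ 1 :=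
  encard_le_one_iff.2 fun _ _ ha hb => hC ha.1 hb.1 (ha.2.trans (Eq.symm hb.2))

theorem exists_iUnion_isPseudoBranching_eq {B : Set A}
    (hB : ∀ v, (B ∩ head ⁻¹' {v}).encard ≤ k) :
    ∃ C : Fin k → Set A, Pairwise (Disjoint on C) ∧ ⋃ i, C i = B ∧
      ∀ i, IsPseudoBranching head (C i) := by
  have hfiber (v : V) : ((fun a : B => head a) ⁻¹' {v}).encard ≤ k := by
    rw [← Subtype.val_injective.encard_image]
    refine (encard_le_encard ?_).trans (hB v)
    rintro _ ⟨a, ha, rfl⟩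
    exact ⟨a.2, ha⟩
  obtain ⟨c, hc⟩ := exists_fin_coloring_injOn hfiber
  refine ⟨fun i => Subtype.val '' (c ⁻¹' {i}), fun i j hij => ?_, ?_, fun i => ?_⟩
  · exact (disjoint_image_iff Subtype.val_injective).2 (pairwise_disjoint_fiber c hij)
  · rw [← image_iUnion, ← preimage_iUnion, iUnion_of_singleton, preimage_univ, image_univ,
      Subtype.range_coe]
  · exact (hc i).image_of_comp

theorem card_le_mul_encard_image_tail {S : Finset V} (hS : ∀ v ∈ S, k + 1 ≤ (head ⁻¹' {v}).encard)
    (hfin : (tail '' (head ⁻¹' S)).Finite)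
    (hmad : ∀ X : Set V, X.Finite → X.Nonempty →
      (d + 1) * (tail ⁻¹' X ∩ head ⁻¹' X).encard ≤ d * (k + 1) * X.encard) :
    (S.card : ℕ∞) ≤ d * (tail '' (head ⁻¹' S)).encard := by
  rcases S.eq_empty_or_nonempty with rfl | hne
  · simp
  set N : Set V := tail '' (head ⁻¹' S)
  have hentering : head ⁻¹' S ⊆ tail ⁻¹' (S ∪ N) ∩ head ⁻¹' (S ∪ N) := fun a ha =>
    ⟨Or.inr (mem_image_of_mem tail ha), Or.inl ha⟩
  have hcount : ((d + 1) * (S.card * (k + 1)) : ℕ∞) ≤ d * (k + 1) * (S.card + N.encard) :=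
    calc ((d + 1) * (S.card * (k + 1)) : ℕ∞)
        ≤ (d + 1) * (head ⁻¹' S).encard := by
          gcongr
          exact card_mul_le_encard_preimage hS
      _ ≤ (d + 1) * (tail ⁻¹' (S ∪ N) ∩ head ⁻¹' (S ∪ N)).encard := by
          gcongr
      _ ≤ d * (k + 1) * (S ∪ N : Set V).encard :=
          hmad _ (S.finite_toSet.union hfin) (hne.to_set.mono subset_union_left)
      _ ≤ d * (k + 1) * (S.card + N.encard) := by
          gcongr
          exact (encard_union_le _ _).trans_eq (by rw [encard_coe_eq_coe_finsetCard])
  rw [← hfin.cast_ncard_eq] at hcount ⊢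
  norm_cast at hcount ⊢
  have hcancel : (d + 1) * S.card ≤ d * (S.card + N.ncard) :=
    Nat.le_of_mul_le_mul_right (by linarith) k.succ_pos
  linarith

theorem exists_bijOn_full_vertices_forall_encard_le (hin : ∀ v, (head ⁻¹' {v}).Finite)
    (hmad : ∀ X : Set V, X.Finite → X.Nonempty →
      (d + 1) * (tail ⁻¹' X ∩ head ⁻¹' X).encard ≤ d * (k + 1) * X.encard) :
    ∃ F : Set A, BijOn head F {v | k + 1 ≤ (head ⁻¹' {v}).encard} ∧
      ∀ v, (F ∩ tail ⁻¹' {v}).encard ≤ d :=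
  exists_bijOn_forall_encard_inter_fiber_le (fun v _ => hin v) fun S hS =>
    card_le_mul_encard_image_tail hS ((S.finite_toSet.preimage' fun v _ => hin v).image tail) hmad

theorem stmt1_general (hin : ∀ v, (head ⁻¹' {v}).encard ≤ k + 1)
    (hmad : ∀ X : Set V, X.Finite → X.Nonempty →
      (d + 1) * (tail ⁻¹' X ∩ head ⁻¹' X).encard ≤ d * (k + 1) * X.encard) :
    ∃ C : Fin (k + 1) → Set A, Pairwise (Disjoint on C) ∧ ⋃ i, C i = univ ∧
      (∀ i, IsPseudoBranching head (C i)) ∧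
      ∀ v, (C (Fin.last k) ∩ tail ⁻¹' {v}).encard ≤ d := by
  have hfin (v : V) : (head ⁻¹' {v}).Finite :=
    finite_of_encard_le_coe (k := k + 1) (by exact_mod_cast hin v)
  obtain ⟨F, hF, hFout⟩ := exists_bijOn_full_vertices_forall_encard_le hfin hmad
  obtain ⟨C, hdisj, hunion, hC⟩ :=
    exists_iUnion_isPseudoBranching_eq (encard_compl_inter_fiber_le hin hF.surjOn)
  have hCF (i : Fin k) : Disjoint (C i) F :=
    disjoint_compl_left.mono_left (hunion ▸ subset_iUnion C i)
  refine ⟨Fin.snoc C F, pairwise_disjoint_snoc hdisj hCF, ?_, ?_, ?_⟩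
  · rw [iUnion_snoc, hunion, compl_union_self]
  · simpa [Fin.forall_fin_succ'] using ⟨hC, hF.injOn⟩
  · simpa using hFout

end Digraph

/-- digraph with `Δ⁻ ≤ k+1` and `(1/2)·mad(D) ≤ k + (d-k)/(d+1)`
decomposes into `k+1` pseudo-branchings, the last having out-degree at most `d`
everywhere. -/
theorem stmt1 {V A : Type} [Fintype V] [Fintype A]
    (tail head : A → V) (hloop : ∀ a : A, tail a ≠ head a)
    (k d : ℕ) (hk : 0 < k) (hd : 0 < d)
    (hin : ∀ v : V, {a : A | head a = v}.ncard ≤ k + 1)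
    (hmad : ∀ X : Set V, X.Nonempty →
      (d + 1) * {a : A | tail a ∈ X ∧ head a ∈ X}.ncard ≤ d * (k + 1) * X.ncard) :
    ∃ C : Fin (k + 1) → Set A,
      (∀ i j, i ≠ j → Disjoint (C i) (C j)) ∧
      (⋃ i, C i) = Set.univ ∧
      (∀ i, ∀ v : V, {a : A | a ∈ C i ∧ head a = v}.ncard ≤ 1) ∧
      (∀ v : V, {a : A | a ∈ C (Fin.last k) ∧ tail a = v}.ncard ≤ d) := by
  simp only [← Nat.cast_le (α := ℕ∞), Nat.cast_mul, Nat.cast_add, Nat.cast_one,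
    (toFinite _).cast_ncard_eq] at hin hmad ⊢
  obtain ⟨C, hdisj, hunion, hC, hout⟩ := stmt1_general hin fun X _ => hmad X
  exact ⟨C, fun _ _ hij => hdisj hij, hunion, fun i => (hC i).encard_inter_fiber_le_one, hout⟩
end

section
/- For all positive integers k, d and every real ε > 0, there exists a digraph D = (V, A) with the following properties: (i) D is acyclic (it contains no directed cycle); (ii) the underlying graph of D is bipartite (V partitions into two parts such that every arc has its tail in one part and its head in the other); (iii) Δ⁻(D) ≤ k+1; (iv) |A[X]| < (k + (d−k)/(d+1) + ε)·(|X|−1) for every X ⊆ V with |X| ≥ 2 (i.e. γ(D) < k + (d−k)/(d+1) + ε); and (v) A cannot be partitioned into k+1 branchings B₁, …, B_k, B_{k+1} with Δ⁺(B_{k+1}) ≤ d. -/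
/-
A decomposition gives every vertex of in-degree `k + 1` exactly one arc of each branching, so it
cannot exist in a bipartite graph in which all heads have degree `k + 1` and there are more than `d`
heads for each tail. Start from a bipartite graph of huge girth in which heads have degree `k + 1`
and tails have degree `d (k + 1)`, so that there are exactly `d` heads for each tail, and glue two
copies of it along one tail `t₀`: this destroys one tail and no head. A vertex set of the result
spanning fewer arcs than vertices satisfies the arboricity bound trivially; one spanning at least as
many arcs as vertices contains a cycle, hence is huge, and then counting its arcs by their tails and
by their heads gives the bound, as the double degree of `t₀` is absorbed by `ε`.

Graphs of large girth come from iterated lifts: if the arc `a` has voltage the `a`-th basis vector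
of `A → ZMod 2`, then a cycle of the lift projects to a closed walk traversing every arc an even
number of times, and the arcs of this walk contain a cycle of at most half the length.
-/

open Finset

section Fibers

variable {A W : Type*} [DecidableEq W] {p : A → W} {Φ : Finset A}

theorem two_le_card_fiber (h : ∀ a ∈ Φ, ∃ b ∈ Φ, b ≠ a ∧ p b = p a) :
    ∀ w ∈ Φ.image p, 2 ≤ #{a ∈ Φ | p a = w} := forall_mem_image.2 fun a ha => by
  obtain ⟨b, hb, hba, hp⟩ := h a ha
  exact one_lt_card.2 ⟨b, by simp [hb, hp], a, by simp [ha], hba⟩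

theorem two_mul_card_image_le_card (h : ∀ a ∈ Φ, ∃ b ∈ Φ, b ≠ a ∧ p b = p a) :
    2 * #(Φ.image p) ≤ #Φ :=
  mul_card_image_le_card Φ 2 (two_le_card_fiber h)

theorem card_fiber_eq_two (h : ∀ a ∈ Φ, ∃ b ∈ Φ, b ≠ a ∧ p b = p a)
    (hcard : #Φ ≤ 2 * #(Φ.image p)) : ∀ w ∈ Φ.image p, #{a ∈ Φ | p a = w} = 2 := by
  have hsum : ∑ _w ∈ Φ.image p, 2 = ∑ w ∈ Φ.image p, #{a ∈ Φ | p a = w} := by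
    refine le_antisymm (sum_le_sum (two_le_card_fiber h)) ?_
    rwa [← card_eq_sum_card_image, sum_const, smul_eq_mul, mul_comm]
  exact fun w hw => ((sum_eq_sum_iff_of_le (two_le_card_fiber h)).1 hsum w hw).symm

theorem sum_comp_eq_zero_of_card_fiber_eq_two {R : Type*} [Semiring R] [CharP R 2]
    (h : ∀ w ∈ Φ.image p, #{a ∈ Φ | p a = w} = 2) (φ : W → R) : ∑ a ∈ Φ, φ (p a) = 0 := by
  rw [sum_comp φ p]
  exact sum_eq_zero fun w hw => by rw [h w hw, two_nsmul, CharTwo.add_self_eq_zero]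

theorem exists_ne_of_card_fiber_eq_two (h : ∀ w ∈ Φ.image p, #{a ∈ Φ | p a = w} = 2) {a : A}
    (ha : a ∈ Φ) : ∃ b ∈ Φ, b ≠ a ∧ p b = p a := by
  obtain ⟨b, hb, hba⟩ := exists_mem_ne (by rw [h _ (mem_image_of_mem p ha)]; simp) a
  exact ⟨b, (mem_filter.1 hb).1, hba, (mem_filter.1 hb).2⟩

theorem exists_ne_of_card_image_le_card_image_erase [DecidableEq A] {a : A} (ha : a ∈ Φ)
    (h : #(Φ.image p) ≤ #((Φ.erase a).image p)) : ∃ b ∈ Φ, b ≠ a ∧ p b = p a := by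
  have himage := eq_of_subset_of_card_le (image_subset_image (erase_subset a Φ)) h
  obtain ⟨b, hb, hp⟩ := mem_image.1 (himage ▸ mem_image_of_mem p ha)
  exact ⟨b, mem_of_mem_erase hb, ne_of_mem_erase hb, hp⟩

theorem card_filter_mem_of_card_fiber_eq [Fintype A] {r : ℕ} (h : ∀ w, #{a | p a = w} = r)
    (Y : Finset W) : #{a | p a ∈ Y} = r * #Y := by
  rw [← sum_card_fiberwise_eq_card_filter, sum_congr rfl fun w _ => h w, sum_const, smul_eq_mul,
    mul_comm]

theorem card_fiber_prodMk_perm [Fintype A] {G : Type*} [Fintype G] [DecidableEq G] (p : A → W)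
    (σ : A → Equiv.Perm G) (w : W) (v : G) :
    #{x : A × G | (p x.1, σ x.1 x.2) = (w, v)} = #{a | p a = w} := by
  have section_injective : Function.Injective fun a => (a, (σ a).symm v) :=
    fun a b hab => congrArg Prod.fst hab
  rw [← card_map ⟨_, section_injective⟩]
  congr 1
  ext ⟨a, u⟩
  simp only [mem_filter_univ, Prod.mk.injEq, mem_map, Function.Embedding.coeFn_mk]
  constructor
  · rintro ⟨hp, rfl⟩
    exact ⟨a, hp, rfl, (σ a).symm_apply_apply u⟩
  · rintro ⟨b, hp, rfl, rfl⟩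
    exact ⟨hp, (σ b).apply_symm_apply v⟩

end Fibers

section Girth

variable {T H A : Type*} [DecidableEq T] [DecidableEq H] {tail : A → T} {head : A → H}

/-- A nonempty arc set of a bipartite multigraph having at least as many arcs as endpoints. Such
sets contain a cycle, and the inclusion-minimal ones are the cycles. -/
def IsDense (tail : A → T) (head : A → H) (Φ : Finset A) : Prop :=
  Φ.Nonempty ∧ #(Φ.image tail) + #(Φ.image head) ≤ #Φ

/-- The underlying bipartite multigraph has no cycle with fewer than `g` arcs. Cycles are replaced
by dense arc sets, which makes no difference as the minimal dense sets are the cycles. -/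
def GirthAtLeast (tail : A → T) (head : A → H) (g : ℕ) : Prop :=
  ∀ Φ : Finset A, IsDense tail head Φ → g ≤ #Φ

theorem isDense_of_forall_exists_ne {Φ : Finset A} (hne : Φ.Nonempty)
    (htail : ∀ a ∈ Φ, ∃ b ∈ Φ, b ≠ a ∧ tail b = tail a)
    (hhead : ∀ a ∈ Φ, ∃ b ∈ Φ, b ≠ a ∧ head b = head a) : IsDense tail head Φ := by
  have := two_mul_card_image_le_card htail
  have := two_mul_card_image_le_card hhead
  exact ⟨hne, by lia⟩

theorem IsDense.image {T' H' A' : Type*} [DecidableEq T'] [DecidableEq H'] [DecidableEq A']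
    {tail' : A' → T'} {head' : A' → H'} {Φ : Finset A} (hΦ : IsDense tail head Φ) {q : A → A'}
    {u : T → T'} {w : H → H'} (hq : Set.InjOn q Φ) (hu : ∀ a, tail' (q a) = u (tail a))
    (hw : ∀ a, head' (q a) = w (head a)) : IsDense tail' head' (Φ.image q) := by
  have htail : (Φ.image q).image tail' = (Φ.image tail).image u := by
    simp only [image_image, Function.comp_def, hu]
  have hhead : (Φ.image q).image head' = (Φ.image head).image w := by
    simp only [image_image, Function.comp_def, hw]
  refine ⟨hΦ.1.image q, ?_⟩
  rw [htail, hhead, card_image_of_injOn hq]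
  exact (add_le_add card_image_le card_image_le).trans hΦ.2

theorem card_le_of_minimal_isDense [DecidableEq A] {Φ : Finset A}
    (hΦ : Minimal (IsDense tail head) Φ) {a : A} (ha : a ∈ Φ) :
    #Φ ≤ #((Φ.erase a).image tail) + #((Φ.erase a).image head) := by
  have htail : 0 < #(Φ.image tail) := (hΦ.prop.1.image tail).card_pos
  have hhead : 0 < #(Φ.image head) := (hΦ.prop.1.image head).card_pos
  have hcard := hΦ.prop.2
  have herase := card_erase_add_one ha
  have hne : (Φ.erase a).Nonempty := card_pos.1 (by lia)
  by_contra! hlt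
  exact hΦ.not_prop_of_lt (erase_ssubset ha) ⟨hne, by lia⟩

theorem IsDense.exists_subset_card_fiber_eq_two {Φ : Finset A} (hΦ : IsDense tail head Φ) :
    ∃ Ψ ⊆ Φ, Ψ.Nonempty ∧ (∀ t ∈ Ψ.image tail, #{a ∈ Ψ | tail a = t} = 2) ∧
      ∀ h ∈ Ψ.image head, #{a ∈ Ψ | head a = h} = 2 := by
  classical
  obtain ⟨Ψ, hΨΦ, hΨ⟩ := exists_minimal_le_of_wellFoundedLT (IsDense tail head) Φ hΦ
  have tail_le (a : A) : #((Ψ.erase a).image tail) ≤ #(Ψ.image tail) :=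
    card_le_card (image_subset_image (erase_subset a Ψ))
  have head_le (a : A) : #((Ψ.erase a).image head) ≤ #(Ψ.image head) :=
    card_le_card (image_subset_image (erase_subset a Ψ))
  have erase_ge : ∀ a ∈ Ψ, #(Ψ.image tail) ≤ #((Ψ.erase a).image tail) ∧
      #(Ψ.image head) ≤ #((Ψ.erase a).image head) := fun a ha => by
    have := card_le_of_minimal_isDense hΨ ha
    have := hΨ.prop.2
    grind
  have tail_ne : ∀ a ∈ Ψ, ∃ b ∈ Ψ, b ≠ a ∧ tail b = tail a := fun a ha =>
    exists_ne_of_card_image_le_card_image_erase ha (erase_ge a ha).1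
  have head_ne : ∀ a ∈ Ψ, ∃ b ∈ Ψ, b ≠ a ∧ head b = head a := fun a ha =>
    exists_ne_of_card_image_le_card_image_erase ha (erase_ge a ha).2
  have hcard : #Ψ ≤ #(Ψ.image tail) + #(Ψ.image head) := by
    obtain ⟨a, ha⟩ := hΨ.prop.1
    exact (card_le_of_minimal_isDense hΨ ha).trans (add_le_add (tail_le a) (head_le a))
  have := two_mul_card_image_le_card tail_ne
  have := two_mul_card_image_le_card head_ne
  exact ⟨Ψ, hΨΦ, hΨ.prop.1, card_fiber_eq_two tail_ne (by lia),
    card_fiber_eq_two head_ne (by lia)⟩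

end Girth

section Biregular

variable {T H A : Type*} [Fintype A] [DecidableEq T] [DecidableEq H] {tail : A → T}
  {head : A → H} {r s : ℕ}

/-- Every tail vertex has out-degree `r` and every head vertex has in-degree `s`. -/
def IsBiregular (tail : A → T) (head : A → H) (r s : ℕ) : Prop :=
  (∀ t, #{a | tail a = t} = r) ∧ ∀ h, #{a | head a = h} = s

theorem IsBiregular.mul_card_eq_mul_card [Fintype T] [Fintype H] (h : IsBiregular tail head r s) :
    r * Fintype.card T = s * Fintype.card H := by
  have htail := card_filter_mem_of_card_fiber_eq h.1 univ
  have hhead := card_filter_mem_of_card_fiber_eq h.2 univ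
  simp only [mem_univ, filter_true, card_univ] at htail hhead
  exact htail.symm.trans hhead

end Biregular

section Lift

variable {T H A : Type*} [DecidableEq A]

/-- The tail map of the lift of a multigraph along the voltage group `A → ZMod 2`. -/
def liftTail (tail : A → T) (x : A × (A → ZMod 2)) : T × (A → ZMod 2) :=
  (tail x.1, x.2)

/-- The head map of the lift of a multigraph along the voltage group `A → ZMod 2`: the arc `a` has
the `a`-th basis vector as its voltage. -/
def liftHead (head : A → H) (x : A × (A → ZMod 2)) : H × (A → ZMod 2) :=
  (head x.1, x.2 + Pi.single x.1 1)

variable [Fintype A] [DecidableEq T] [DecidableEq H] {tail : A → T} {head : A → H}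

theorem IsBiregular.lift {r s : ℕ} (h : IsBiregular tail head r s) :
    IsBiregular (liftTail tail) (liftHead head) r s :=
  ⟨fun ⟨t, v⟩ => (card_fiber_prodMk_perm tail (fun _ => Equiv.refl _) t v).trans (h.1 t),
    fun ⟨w, v⟩ => (card_fiber_prodMk_perm head (fun a => Equiv.addRight (Pi.single a 1)) w v).trans
      (h.2 w)⟩

/-- The coordinate `e` of the voltages, summed along a cycle, counts its passages through `e`. -/
theorem even_card_fiber_fst_of_card_fiber_eq_two {Ψ : Finset (A × (A → ZMod 2))}
    (htail : ∀ t ∈ Ψ.image (liftTail tail), #{x ∈ Ψ | liftTail tail x = t} = 2)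
    (hhead : ∀ h ∈ Ψ.image (liftHead head), #{x ∈ Ψ | liftHead head x = h} = 2) (e : A) :
    Even #{x ∈ Ψ | x.1 = e} := by
  have tail_sum : ∑ x ∈ Ψ, x.2 e = 0 :=
    sum_comp_eq_zero_of_card_fiber_eq_two htail fun y => y.2 e
  have head_sum : ∑ x ∈ Ψ, (x.2 e + (Pi.single x.1 1 : A → ZMod 2) e) = 0 := by
    simpa only [liftHead, Pi.add_apply] using
      sum_comp_eq_zero_of_card_fiber_eq_two hhead fun y => y.2 e
  rw [sum_add_distrib, tail_sum, zero_add] at head_sum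
  rw [← ZMod.natCast_eq_zero_iff_even, ← sum_boole]
  simpa only [Pi.single_apply, eq_comm (a := e)] using head_sum

theorem isDense_image_fst_of_card_fiber_eq_two {Ψ : Finset (A × (A → ZMod 2))} (hne : Ψ.Nonempty)
    (htail : ∀ t ∈ Ψ.image (liftTail tail), #{x ∈ Ψ | liftTail tail x = t} = 2)
    (hhead : ∀ h ∈ Ψ.image (liftHead head), #{x ∈ Ψ | liftHead head x = h} = 2) :
    IsDense tail head (Ψ.image Prod.fst) := by
  refine isDense_of_forall_exists_ne (hne.image _) (forall_mem_image.2 fun x hx => ?_)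
    (forall_mem_image.2 fun x hx => ?_)
  · obtain ⟨y, hy, hyx, hxy⟩ := exists_ne_of_card_fiber_eq_two htail hx
    rw [liftTail, liftTail, Prod.mk.injEq] at hxy
    exact ⟨y.1, mem_image_of_mem _ hy, fun h => hyx (Prod.ext h hxy.2), hxy.1⟩
  · obtain ⟨y, hy, hyx, hxy⟩ := exists_ne_of_card_fiber_eq_two hhead hx
    rw [liftHead, liftHead, Prod.mk.injEq] at hxy
    refine ⟨y.1, mem_image_of_mem _ hy, fun h => hyx (Prod.ext h ?_), hxy.1⟩
    exact add_right_cancel (h ▸ hxy.2)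

theorem GirthAtLeast.lift {g : ℕ} (hg : GirthAtLeast tail head g) :
    GirthAtLeast (liftTail tail) (liftHead head) (2 * g) := by
  intro Φ hΦ
  obtain ⟨Ψ, hΨΦ, hne, htail, hhead⟩ := hΦ.exists_subset_card_fiber_eq_two
  have two_le_fiber : ∀ e ∈ Ψ.image Prod.fst, 2 ≤ #{x ∈ Ψ | x.1 = e} := fun e he => by
    obtain ⟨x, hx, rfl⟩ := mem_image.1 he
    have hpos : 0 < #{y ∈ Ψ | y.1 = x.1} := card_pos.2 ⟨x, by simp [hx]⟩
    exact Nat.le_of_dvd hpos (even_card_fiber_fst_of_card_fiber_eq_two htail hhead x.1).two_dvd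
  calc
    2 * g ≤ 2 * #(Ψ.image Prod.fst) :=
      Nat.mul_le_mul_left 2 (hg _ (isDense_image_fst_of_card_fiber_eq_two hne htail hhead))
    _ ≤ #Ψ := mul_card_image_le_card Ψ 2 two_le_fiber
    _ ≤ #Φ := card_le_card hΨΦ

end Lift

theorem exists_isBiregular_girthAtLeast (r : ℕ) {s : ℕ} (hs : 0 < s) (n : ℕ) :
    ∃ (T H A : Type) (_ : Fintype T) (_ : Fintype H) (_ : Fintype A) (_ : DecidableEq T)
      (_ : DecidableEq H) (tail : A → T) (head : A → H),
      Nonempty T ∧ IsBiregular tail head r s ∧ GirthAtLeast tail head (2 ^ n) := by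
  classical
  induction n with
  | zero =>
    refine ⟨Fin s, Fin r, Fin s × Fin r, inferInstance, inferInstance, inferInstance, inferInstance,
      inferInstance, Prod.fst, Prod.snd, ⟨⟨0, hs⟩⟩, ⟨fun t => ?_, fun h => ?_⟩,
      fun Φ hΦ => card_pos.2 hΦ.1⟩
    · have : ({a | a.1 = t} : Finset (Fin s × Fin r)) = {t} ×ˢ univ := by grind
      simp [this]
    · have : ({a | a.2 = h} : Finset (Fin s × Fin r)) = univ ×ˢ {h} := by grind
      simp [this]
  | succ n ih =>
    obtain ⟨T, H, A, _, _, _, _, _, tail, head, _, hreg, hg⟩ := ih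
    exact ⟨_, _, _, inferInstance, inferInstance, inferInstance, inferInstance, inferInstance,
      liftTail tail, liftHead head, inferInstance, hreg.lift, pow_succ' 2 n ▸ hg.lift⟩

section Wedge

variable {T H A : Type*} [DecidableEq T]

/-- The tail map of the multigraph obtained from two disjoint copies by gluing the two copies of
`t₀`. The glued vertex is `Sum.inl t₀`, and `Sum.inr t₀` becomes isolated; the head map is
`Sum.map head head`. -/
def wedgeTail (tail : A → T) (t₀ : T) : A ⊕ A → T ⊕ T :=
  Sum.elim (fun a => Sum.inl (tail a))
    fun a => if tail a = t₀ then Sum.inl t₀ else Sum.inr (tail a)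

theorem wedgeTail_ne_inr (tail : A → T) (t₀ : T) (a : A ⊕ A) :
    wedgeTail tail t₀ a ≠ Sum.inr t₀ := by
  obtain a | a := a
  · exact Sum.inl_ne_inr
  · by_cases ha : tail a = t₀ <;> simp [wedgeTail, ha]

theorem sumElim_id_id_wedgeTail (tail : A → T) (t₀ : T) (a : A ⊕ A) :
    Sum.elim id id (wedgeTail tail t₀ a) = tail (Sum.elim id id a) := by
  obtain a | a := a
  · rfl
  · by_cases ha : tail a = t₀ <;> simp [wedgeTail, ha]

variable [DecidableEq H] {tail : A → T} {head : A → H}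

theorem card_image_toLeft_add_card_image_toRight_le (tail : A → T) (t₀ : T) (Φ : Finset (A ⊕ A)) :
    #(Φ.toLeft.image tail) + #(Φ.toRight.image tail) ≤ #(Φ.image (wedgeTail tail t₀)) + 1 := by
  have hleft : Φ.toLeft.image tail ⊆ (Φ.image (wedgeTail tail t₀)).toLeft :=
    image_subset_iff.2 fun a ha => mem_toLeft.2 (mem_image.2 ⟨_, mem_toLeft.1 ha, rfl⟩)
  have hright : (Φ.toRight.image tail).erase t₀ ⊆ (Φ.image (wedgeTail tail t₀)).toRight := by
    intro t ht
    obtain ⟨ht₀, a, ha, rfl⟩ := (mem_erase.trans (and_congr_right' mem_image)).1 ht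
    exact mem_toRight.2 (mem_image.2 ⟨_, mem_toRight.1 ha, if_neg ht₀⟩)
  have := card_le_card hleft
  have := card_le_card hright
  have := pred_card_le_card_erase (a := t₀) (s := Φ.toRight.image tail)
  have := card_toLeft_add_card_toRight (u := Φ.image (wedgeTail tail t₀))
  lia

theorem card_image_sumMap (p q : A → H) (Φ : Finset (A ⊕ A)) :
    #(Φ.image (Sum.map p q)) = #(Φ.toLeft.image p) + #(Φ.toRight.image q) := by
  rw [← card_disjSum]
  congr 1
  ext (h | h) <;> simp

theorem injOn_sumElim_id_id {Φ : Finset (A ⊕ A)} (h : Φ.toLeft = ∅ ∨ Φ.toRight = ∅) :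
    Set.InjOn (Sum.elim id id) (Φ : Set (A ⊕ A)) := by
  rcases h with h | h <;> rintro (a | a) ha (b | b) hb hab
  all_goals simp_all [eq_empty_iff_forall_notMem]

theorem GirthAtLeast.wedge {g : ℕ} (hg : GirthAtLeast tail head g) (t₀ : T) :
    GirthAtLeast (wedgeTail tail t₀) (Sum.map head head) g := by
  classical
  intro Φ hΦ
  have hcard := card_toLeft_add_card_toRight (u := Φ)
  have one_side (h : Set.InjOn (Sum.elim id id) (Φ : Set (A ⊕ A))) : g ≤ #Φ := by
    rw [← card_image_of_injOn h]
    exact hg _ (hΦ.image h (fun a => (sumElim_id_id_wedgeTail tail t₀ a).symm)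
      (w := Sum.elim id id) fun a => by cases a <;> rfl)
  obtain hleft | hleft := Φ.toLeft.eq_empty_or_nonempty
  · exact one_side (injOn_sumElim_id_id (.inl hleft))
  obtain hright | hright := Φ.toRight.eq_empty_or_nonempty
  · exact one_side (injOn_sumElim_id_id (.inr hright))
  by_contra! hlt
  have sparse_left : ¬ IsDense tail head Φ.toLeft := fun h => by
    have := hg _ h
    lia
  have sparse_right : ¬ IsDense tail head Φ.toRight := fun h => by
    have := hg _ h
    lia
  have := hΦ.2
  have := card_image_toLeft_add_card_image_toRight_le tail t₀ Φ
  have := card_image_sumMap head head Φ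
  simp only [IsDense, hleft, hright, true_and, not_le] at sparse_left sparse_right
  lia

theorem card_fiber_sumMap [Fintype A] {s : ℕ} (h : ∀ w, #{a | head a = w} = s) (w : H ⊕ H) :
    #{a | Sum.map head head a = w} = s := by
  obtain w | w := w
  · have hfiber : ({a | Sum.map head head a = Sum.inl w} : Finset (A ⊕ A)) =
        ({a | head a = w} : Finset A).map Function.Embedding.inl := by ext (a | a) <;> simp
    rw [hfiber, card_map, h]
  · have hfiber : ({a | Sum.map head head a = Sum.inr w} : Finset (A ⊕ A)) =
        ({a | head a = w} : Finset A).map Function.Embedding.inr := by ext (a | a) <;> simp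
    rw [hfiber, card_map, h]

theorem card_filter_wedgeTail_mem_le [Fintype A] {r : ℕ} (h : ∀ t, #{a | tail a = t} = r) (t₀ : T)
    (Y : Finset (T ⊕ T)) : #{a | wedgeTail tail t₀ a ∈ Y} ≤ r * (#Y + 1) := by
  set Φ : Finset (A ⊕ A) := {a | wedgeTail tail t₀ a ∈ Y}
  have hleft : Φ.toLeft ⊆ ({a | tail a ∈ Y.toLeft} : Finset A) := fun a ha => by
    simpa [wedgeTail] using (mem_filter.1 (mem_toLeft.1 ha)).2
  have hright : Φ.toRight ⊆ ({a | tail a ∈ insert t₀ Y.toRight} : Finset A) := fun a ha => by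
    by_cases hat : tail a = t₀
    · simp [hat]
    · simpa [wedgeTail, hat] using (mem_filter.1 (mem_toRight.1 ha)).2
  calc
    #Φ = #Φ.toLeft + #Φ.toRight := card_toLeft_add_card_toRight.symm
    _ ≤ r * #Y.toLeft + r * #(insert t₀ Y.toRight) := by
      rw [← card_filter_mem_of_card_fiber_eq h, ← card_filter_mem_of_card_fiber_eq h]
      exact add_le_add (card_le_card hleft) (card_le_card hright)
    _ ≤ r * #Y.toLeft + r * (#Y.toRight + 1) := by gcongr; exact card_insert_le _ _
    _ = r * (#Y + 1) := by rw [← card_toLeft_add_card_toRight (u := Y)]; ring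

end Wedge

theorem exists_girthAtLeast_of_card_head_eq_mul_card_tail (k d n : ℕ) :
    ∃ (T H A : Type) (_ : Fintype T) (_ : Fintype H) (_ : Fintype A) (_ : DecidableEq T)
      (_ : DecidableEq H) (tail : A → T) (head : A → H),
      Fintype.card H = d * Fintype.card T ∧ (∃ t, ∀ a, tail a ≠ t) ∧
      (∀ h, #{a | head a = h} = k + 1) ∧
      (∀ Y : Finset T, #{a | tail a ∈ Y} ≤ d * (k + 1) * (#Y + 1)) ∧
      GirthAtLeast tail head (2 ^ n) := by
  obtain ⟨T, H, A, _, _, _, _, _, tail, head, ⟨t₀⟩, hreg, hg⟩ :=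
    exists_isBiregular_girthAtLeast (d * (k + 1)) k.succ_pos n
  have hcard : Fintype.card H = d * Fintype.card T := by
    refine Nat.eq_of_mul_eq_mul_left k.succ_pos (hreg.mul_card_eq_mul_card.symm.trans ?_)
    rw [Nat.succ_eq_add_one]
    ring
  refine ⟨T ⊕ T, H ⊕ H, A ⊕ A, inferInstance, inferInstance, inferInstance, inferInstance,
    inferInstance, wedgeTail tail t₀, Sum.map head head, ?_, ⟨_, wedgeTail_ne_inr tail t₀⟩,
    card_fiber_sumMap hreg.2, card_filter_wedgeTail_mem_le hreg.1 t₀, hg.wedge t₀⟩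
  rw [Fintype.card_sum, Fintype.card_sum, hcard, mul_add]

section Arboricity

variable {T H A : Type*} [Fintype A] [DecidableEq T] [DecidableEq H] {tail : A → T} {head : A → H}

/-- The set `A[X]` of arcs spanned by the vertex set `X`. -/
def spannedArcs (tail : A → T) (head : A → H) (X : Finset (T ⊕ H)) : Finset A :=
  {a | Sum.inl (tail a) ∈ X ∧ Sum.inr (head a) ∈ X}

theorem GirthAtLeast.le_card_spannedArcs {g : ℕ} (hg : GirthAtLeast tail head g)
    {X : Finset (T ⊕ H)} (hX : X.Nonempty) (hcard : #X ≤ #(spannedArcs tail head X)) :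
    g ≤ #(spannedArcs tail head X) := by
  have htail : (spannedArcs tail head X).image tail ⊆ X.toLeft :=
    image_subset_iff.2 fun a ha => mem_toLeft.2 (mem_filter.1 ha).2.1
  have hhead : (spannedArcs tail head X).image head ⊆ X.toRight :=
    image_subset_iff.2 fun a ha => mem_toRight.2 (mem_filter.1 ha).2.2
  refine hg _ ⟨card_pos.1 (hX.card_pos.trans_le hcard), ?_⟩
  calc
    _ ≤ #X.toLeft + #X.toRight := add_le_add (card_le_card htail) (card_le_card hhead)
    _ = #X := card_toLeft_add_card_toRight
    _ ≤ _ := hcard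

theorem add_mul_card_spannedArcs_le {r s : ℕ}
    (htail : ∀ Y : Finset T, #{a | tail a ∈ Y} ≤ r * (#Y + 1))
    (hhead : ∀ h, #{a | head a = h} = s) (X : Finset (T ⊕ H)) :
    (r + s) * #(spannedArcs tail head X) ≤ r * s * (#X + 1) := by
  have le_tail : #(spannedArcs tail head X) ≤ r * (#X.toLeft + 1) :=
    (card_le_card (monotone_filter_right _ fun a _ ha => mem_toLeft.2 ha.1)).trans (htail _)
  have le_head : #(spannedArcs tail head X) ≤ s * #X.toRight :=
    (card_le_card (monotone_filter_right _ fun a _ ha => mem_toRight.2 ha.2)).trans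
      (card_filter_mem_of_card_fiber_eq hhead _).le
  calc
    (r + s) * #(spannedArcs tail head X) ≤ r * (s * #X.toRight) + s * (r * (#X.toLeft + 1)) := by
      rw [add_mul]
      gcongr
    _ = r * s * (#X + 1) := by rw [← card_toLeft_add_card_toRight (u := X)]; ring

/-- Here `x` vertices span `m` arcs: fewer than `x`, or at least the girth `g`. -/
theorem lt_add_mul_sub_one {c ε m x g : ℝ} (hc : 1 ≤ c) (hε : 0 < ε) (hx : 2 ≤ x)
    (hm : m ≤ c * (x + 1)) (hg : c * (2 * c / ε + 2) < g) (h : m ≤ x - 1 ∨ g ≤ m) :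
    m < (c + ε) * (x - 1) := by
  obtain hsmall | hlarge := h
  · nlinarith [mul_pos hε (by linarith : 0 < x - 1)]
  · have hx_large : 2 * c / ε + 2 < x + 1 :=
      lt_of_mul_lt_mul_left (hg.trans_le (hlarge.trans hm)) (by linarith)
    have absorb : 2 * c < (x - 1) * ε := (div_lt_iff₀ hε).1 (by linarith)
    calc
      m ≤ c * (x - 1) + 2 * c := by linarith
      _ < c * (x - 1) + (x - 1) * ε := by gcongr
      _ = (c + ε) * (x - 1) := by ring

theorem card_spannedArcs_lt {k d g : ℕ} (hk : 0 < k) (hd : 0 < d) {c ε : ℝ}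
    (hc : c = k + ((d : ℝ) - k) / (d + 1)) (hε : 0 < ε) (hcg : c * (2 * c / ε + 2) < g)
    (htail : ∀ Y : Finset T, #{a | tail a ∈ Y} ≤ d * (k + 1) * (#Y + 1))
    (hhead : ∀ h, #{a | head a = h} = k + 1) (hg : GirthAtLeast tail head g)
    {X : Finset (T ⊕ H)} (hX : 2 ≤ #X) :
    (#(spannedArcs tail head X) : ℝ) < (c + ε) * (#X - 1) := by
  have hk' : (1 : ℝ) ≤ k := mod_cast hk
  have hd' : (1 : ℝ) ≤ d := mod_cast hd
  have hc' : c = d * (k + 1) / (d + 1) := by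
    rw [hc]
    field_simp
    ring
  have one_le : 1 ≤ c := by
    rw [hc', le_div_iff₀ (by linarith)]
    nlinarith
  have le_mul : (#(spannedArcs tail head X) : ℝ) ≤ c * (#X + 1) := by
    have hcount := add_mul_card_spannedArcs_le htail hhead X
    have hcount' : (d + 1) * #(spannedArcs tail head X) ≤ d * (k + 1) * (#X + 1) :=
      Nat.le_of_mul_le_mul_left (by linarith) k.succ_pos
    rw [hc', div_mul_eq_mul_div, le_div_iff₀ (by linarith), mul_comm]
    exact_mod_cast hcount'
  refine lt_add_mul_sub_one one_le hε (mod_cast hX) le_mul hcg ?_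
  obtain hlt | hle := lt_or_ge #(spannedArcs tail head X) #X
  · exact .inl (le_sub_iff_add_le.2 (mod_cast hlt))
  · exact .inr (mod_cast hg.le_card_spannedArcs (card_pos.1 (by lia)) hle)

end Arboricity

section Decomposition

theorem exists_mem_of_iUnion_eq_univ_of_card_eq {ι A : Type*} [Fintype ι] {S : Finset A}
    (hS : #S = Fintype.card ι) {B : ι → Set A} (hB : ⋃ i, B i = Set.univ)
    (hone : ∀ i, (B i ∩ S).Subsingleton) (i : ι) : ∃ a ∈ S, a ∈ B i := by
  choose c hc using Set.iUnion_eq_univ_iff.1 hB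
  have hinj : Set.InjOn c S := fun a ha b hb hab => hone (c a) ⟨hc a, ha⟩ ⟨hab ▸ hc b, hb⟩
  obtain ⟨a, ha, rfl⟩ := surjOn_of_injOn_of_card_le c (fun a _ => mem_coe.2 (mem_univ (c a)))
    hinj hS.ge (mem_coe.2 (mem_univ i))
  exact ⟨a, ha, hc a⟩

variable {T H A : Type*} [Fintype H] {tail : A → T} {head : A → H} {d : ℕ}

theorem card_head_le_mul_card [Finite A] {C : Set A} (hhead : ∀ h, ∃ a ∈ C, head a = h)
    (htail : ∀ t, {a | a ∈ C ∧ tail a = t}.ncard ≤ d) {Y : Finset T} (hY : ∀ a, tail a ∈ Y) :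
    Fintype.card H ≤ d * #Y := by
  classical
  choose s hsC hs using hhead
  refine card_le_mul_card_image_of_maps_to (f := fun h => tail (s h)) (fun h _ => hY (s h)) d
    fun t _ => (?_ : _ ≤ _).trans (htail t)
  rw [← Set.ncard_coe_finset]
  exact Set.ncard_le_ncard_of_injOn s (fun h hh => ⟨hsC h, (mem_filter.1 hh).2⟩)
    (Function.LeftInverse.injective hs).injOn

theorem iUnion_ne_univ_of_card_head_eq [Fintype T] [Fintype A] [DecidableEq H] {ι : Type*}
    [Fintype ι] (hd : 0 < d) (hcard : Fintype.card H = d * Fintype.card T) {t₁ : T}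
    (ht₁ : ∀ a, tail a ≠ t₁) (hdeg : ∀ h, #{a | head a = h} = Fintype.card ι) {B : ι → Set A}
    (hhead : ∀ i h, {a | a ∈ B i ∧ head a = h}.ncard ≤ 1) {i : ι}
    (htail : ∀ t, {a | a ∈ B i ∧ tail a = t}.ncard ≤ d) : ⋃ i, B i ≠ Set.univ := by
  classical
  intro hB
  have meets_head (h : H) : ∃ a ∈ B i, head a = h := by
    have hone (j : ι) : (B j ∩ ({a | head a = h} : Finset A)).Subsingleton := by
      simpa [Set.ncard_le_one_iff_subsingleton, Set.inter_def] using hhead j h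
    obtain ⟨a, ha, hai⟩ := exists_mem_of_iUnion_eq_univ_of_card_eq (hdeg h) hB hone i
    exact ⟨a, hai, (mem_filter.1 ha).2⟩
  have hle : Fintype.card H ≤ d * #(univ.erase t₁) :=
    card_head_le_mul_card meets_head htail fun a => mem_erase.2 ⟨ht₁ a, mem_univ _⟩
  have hlt : #(univ.erase t₁) < Fintype.card T := card_erase_lt_of_mem (mem_univ t₁)
  exact (hle.trans_lt (Nat.mul_lt_mul_of_pos_left hlt hd)).ne hcard

end Decomposition

theorem not_transGen_of_tail_ne_head {V A : Type*} {tail head : A → V}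
    (h : ∀ a b, tail a ≠ head b) (v : V) :
    ¬ Relation.TransGen (fun u w => ∃ a, tail a = u ∧ head a = w) v v := by
  intro hv
  obtain ⟨_, _, a, _, ha⟩ := Relation.TransGen.tail'_iff.1 hv
  obtain ⟨_, ⟨b, hb, _⟩, _⟩ := Relation.TransGen.head'_iff.1 hv
  exact h b a (hb.trans ha.symm)

/-- sharpness of the fractional arboricity bound for the branching
version of the Nine Dragon Tree conjecture for digraphs. -/
theorem stmt2 (k d : ℕ) (hk : 0 < k) (hd : 0 < d) (ε : ℝ) (hε : 0 < ε) :
    ∃ (V A : Type) (_ : Fintype V) (_ : Fintype A) (tail head : A → V),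
      (∀ a : A, tail a ≠ head a) ∧
      -- acyclic: no directed cycle
      (∀ v : V, ¬ Relation.TransGen (fun u w : V => ∃ a : A, tail a = u ∧ head a = w) v v) ∧
      -- underlying graph bipartite
      (∃ P : Set V, ∀ a : A,
        (tail a ∈ P ∧ head a ∉ P) ∨ (tail a ∉ P ∧ head a ∈ P)) ∧
      -- max in-degree at most k+1
      (∀ v : V, {a : A | head a = v}.ncard ≤ k + 1) ∧
      -- fractional arboricity < k + (d-k)/(d+1) + ε
      (∀ X : Set V, 2 ≤ X.ncard →
        ({a : A | tail a ∈ X ∧ head a ∈ X}.ncard : ℝ)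
          < ((k : ℝ) + ((d : ℝ) - (k : ℝ)) / ((d : ℝ) + 1) + ε) * ((X.ncard : ℝ) - 1)) ∧
      -- no decomposition into k+1 branchings the last of which has Δ⁺ ≤ d
      ¬ ∃ B : Fin (k + 1) → Set A,
          (∀ i j, i ≠ j → Disjoint (B i) (B j)) ∧
          (⋃ i, B i) = Set.univ ∧
          (∀ i,
            (∀ v : V, {a : A | a ∈ B i ∧ head a = v}.ncard ≤ 1) ∧
            (∀ X : Set V, X.Nonempty →
              {a : A | a ∈ B i ∧ tail a ∈ X ∧ head a ∈ X}.ncard ≤ X.ncard - 1)) ∧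
          (∀ v : V, {a : A | a ∈ B (Fin.last k) ∧ tail a = v}.ncard ≤ d) := by
  obtain ⟨c, hc⟩ : ∃ c : ℝ, c = k + ((d : ℝ) - k) / (d + 1) := ⟨_, rfl⟩
  obtain ⟨n, hn⟩ := pow_unbounded_of_one_lt (c * (2 * c / ε + 2)) one_lt_two
  obtain ⟨T, H, A, _, _, _, _, _, tail, head, hcard, ⟨t₁, ht₁⟩, hhead, htail, hg⟩ :=
    exists_girthAtLeast_of_card_head_eq_mul_card_tail k d n
  refine ⟨T ⊕ H, A, inferInstance, inferInstance, Sum.inl ∘ tail, Sum.inr ∘ head,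
    fun _ => Sum.inl_ne_inr, not_transGen_of_tail_ne_head fun _ _ => Sum.inl_ne_inr,
    ⟨Set.range Sum.inl, fun a => by simp⟩, ?_, fun X hX => ?_, ?_⟩
  · rintro (t | h)
    · simp
    · simpa [Set.ncard_eq_toFinset_card'] using (hhead h).le
  · lift X to Finset (T ⊕ H) using X.toFinite
    rw [Set.ncard_coe_finset] at hX ⊢
    rw [← hc]
    simpa [spannedArcs, Set.ncard_eq_toFinset_card'] using
      card_spannedArcs_lt hk hd hc hε (mod_cast hn) htail hhead hg hX
  · rintro ⟨B, -, hB, hbranching, hdeg⟩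
    exact iUnion_ne_univ_of_card_head_eq hd hcard ht₁ (by simpa using hhead)
      (fun i h => by simpa using (hbranching i).1 (Sum.inr h))
      (fun t => by simpa using hdeg (Sum.inl t)) hB
end

section
/- Let D = (V, A) be a digraph, T ⊆ V, f : V → ℕ, and let s₀ ∈ V ∖ T with f(s₀) > 0. Suppose that for every nonempty X ⊆ T one has Σ_{v ∈ N⁻(X)} f(v) ≥ |X|. Define ℰ = {X ⊆ T : s₀ ∈ N⁻(X) and Σ_{v ∈ N⁻(X)} f(v) = |X|}. Then ℰ is closed under intersection: if X₁ ∈ ℰ and X₂ ∈ ℰ, then X₁ ∩ X₂ ∈ ℰ (in particular X₁ ∩ X₂ ≠ ∅). -/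
/-- The in-neighborhood of a vertex set `X`: vertices outside `X` that are the
tail of some arc with head in `X`. -/
def inNbr {V A : Type} (tail head : A → V) (X : Set V) : Set V :=
  {y : V | y ∉ X ∧ ∃ a : A, tail a = y ∧ head a ∈ X}

/-!
The weight `X ↦ Σ_{v ∈ N⁻(X)} f v` is submodular and `X ↦ |X|` is modular, so equality between the
two at `X₁` and `X₂` passes to `X₁ ∪ X₂` and `X₁ ∩ X₂`, and the submodular inequality for `X₁, X₂`
is an equality. But it is strict as soon as some `s ∈ N⁻(X₁) ∩ N⁻(X₂)` of positive weight is missing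
from `N⁻(X₁ ∩ X₂)`. Hence `s₀ ∈ N⁻(X₁ ∩ X₂)`.
-/

section FinsumMem

variable {α M : Type*} [AddCommMonoid M] [PartialOrder M] {f : α → M} {s t : Set α}

theorem finsum_mem_le_finsum_mem_of_subset [IsOrderedAddMonoid M]
    (hf : 0 ≤ f) (ht : t.Finite) (hst : s ⊆ t) :
    ∑ᶠ i ∈ s, f i ≤ ∑ᶠ i ∈ t, f i := by
  rw [finsum_mem_eq_finite_toFinset_sum f (ht.subset hst), finsum_mem_eq_finite_toFinset_sum f ht]
  exact Finset.sum_le_sum_of_subset_of_nonneg (Set.Finite.toFinset_mono hst) fun i _ _ => hf i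

theorem finsum_mem_lt_finsum_mem_of_subset [IsOrderedCancelAddMonoid M] {a : α}
    (hf : 0 ≤ f) (ht : t.Finite) (hst : s ⊆ t) (hat : a ∈ t) (has : a ∉ s) (ha : 0 < f a) :
    ∑ᶠ i ∈ s, f i < ∑ᶠ i ∈ t, f i := by
  rw [finsum_mem_eq_finite_toFinset_sum f (ht.subset hst), finsum_mem_eq_finite_toFinset_sum f ht]
  exact Finset.sum_lt_sum_of_subset (Set.Finite.toFinset_mono hst) (ht.mem_toFinset.2 hat)
    (by rwa [Set.Finite.mem_toFinset]) ha fun i _ _ => hf i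

end FinsumMem

section InNbr

variable {V A : Type} {tail head : A → V} {X Y : Set V}

theorem nonempty_of_mem_inNbr {y : V} (hy : y ∈ inNbr tail head X) : X.Nonempty :=
  let ⟨_, a, _, ha⟩ := hy
  ⟨head a, ha⟩

theorem inNbr_subset_biUnion_singleton :
    inNbr tail head X ⊆ ⋃ x ∈ X, inNbr tail head {x} := by
  rintro y ⟨hyX, a, hay, haX⟩
  exact Set.mem_biUnion haX ⟨fun hy => hyX (hy ▸ haX), a, hay, rfl⟩

theorem finite_inNbr (hX : X.Finite) (hfin : ∀ x ∈ X, (inNbr tail head {x}).Finite) :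
    (inNbr tail head X).Finite :=
  (hX.biUnion hfin).subset inNbr_subset_biUnion_singleton

theorem inNbr_union_union_inNbr_inter_subset :
    inNbr tail head (X ∪ Y) ∪ inNbr tail head (X ∩ Y) ⊆
      inNbr tail head X ∪ inNbr tail head Y := by
  rintro v (⟨hv, a, hav, haX | haY⟩ | ⟨hv, a, hav, haX, haY⟩)
  · exact .inl ⟨fun h => hv (.inl h), a, hav, haX⟩
  · exact .inr ⟨fun h => hv (.inr h), a, hav, haY⟩
  · by_cases hvX : v ∈ X
    · exact .inr ⟨fun hvY => hv ⟨hvX, hvY⟩, a, hav, haY⟩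
    · exact .inl ⟨hvX, a, hav, haX⟩

theorem inNbr_union_inter_inNbr_inter_subset :
    inNbr tail head (X ∪ Y) ∩ inNbr tail head (X ∩ Y) ⊆
      inNbr tail head X ∩ inNbr tail head Y := by
  rintro v ⟨⟨hv, -⟩, -, a, hav, haX, haY⟩
  exact ⟨⟨fun h => hv (.inl h), a, hav, haX⟩, ⟨fun h => hv (.inr h), a, hav, haY⟩⟩

end InNbr

section Submodular

variable {V A : Type} {tail head : A → V} {X Y : Set V}
  {M : Type*} [AddCommMonoid M] [PartialOrder M] {f : V → M}

theorem finsum_mem_inNbr_union_add_inter_le [IsOrderedAddMonoid M] (hf : 0 ≤ f)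
    (hX : (inNbr tail head X).Finite) (hY : (inNbr tail head Y).Finite) :
    ∑ᶠ v ∈ inNbr tail head (X ∪ Y), f v + ∑ᶠ v ∈ inNbr tail head (X ∩ Y), f v ≤
      ∑ᶠ v ∈ inNbr tail head X, f v + ∑ᶠ v ∈ inNbr tail head Y, f v := by
  have hXY := (hX.union hY).subset inNbr_union_union_inNbr_inter_subset
  rw [← finsum_mem_union_inter (hXY.subset Set.subset_union_left)
    (hXY.subset Set.subset_union_right), ← finsum_mem_union_inter hX hY]
  exact add_le_add
    (finsum_mem_le_finsum_mem_of_subset hf (hX.union hY) inNbr_union_union_inNbr_inter_subset)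
    (finsum_mem_le_finsum_mem_of_subset hf (hX.inter_of_left _)
      inNbr_union_inter_inNbr_inter_subset)

theorem finsum_mem_inNbr_union_add_inter_lt [IsOrderedCancelAddMonoid M] {s : V} (hf : 0 ≤ f)
    (hX : (inNbr tail head X).Finite) (hY : (inNbr tail head Y).Finite)
    (hsX : s ∈ inNbr tail head X) (hsY : s ∈ inNbr tail head Y)
    (hs : s ∉ inNbr tail head (X ∩ Y)) (hfs : 0 < f s) :
    ∑ᶠ v ∈ inNbr tail head (X ∪ Y), f v + ∑ᶠ v ∈ inNbr tail head (X ∩ Y), f v <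
      ∑ᶠ v ∈ inNbr tail head X, f v + ∑ᶠ v ∈ inNbr tail head Y, f v := by
  have hXY := (hX.union hY).subset inNbr_union_union_inNbr_inter_subset
  rw [← finsum_mem_union_inter (hXY.subset Set.subset_union_left)
    (hXY.subset Set.subset_union_right), ← finsum_mem_union_inter hX hY]
  exact add_lt_add_of_le_of_lt
    (finsum_mem_le_finsum_mem_of_subset hf (hX.union hY) inNbr_union_union_inNbr_inter_subset)
    (finsum_mem_lt_finsum_mem_of_subset hf (hX.inter_of_left _)
      inNbr_union_inter_inNbr_inter_subset ⟨hsX, hsY⟩ (fun h => hs h.2) hfs)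

end Submodular

/-- On finite `X ⊆ T` the sums over `N⁻(X)` are finite, hence never the junk value `0` that `∑ᶠ`
takes on an infinite support. -/
theorem stmt5_general {V A : Type} {R : Type*} [AddCommMonoidWithOne R] [PartialOrder R]
    [IsOrderedCancelAddMonoid R] (tail head : A → V) (T : Set V)
    (hfin : ∀ v ∈ T, (inNbr tail head {v}).Finite)
    (f : V → R) (hf₀ : 0 ≤ f) (s₀ : V) (hf : 0 < f s₀)
    (hcond : ∀ X : Set V, X ⊆ T → X.Finite → X.Nonempty →
      (X.ncard : R) ≤ ∑ᶠ v ∈ inNbr tail head X, f v)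
    (X₁ X₂ : Set V) (h₁ : X₁ ⊆ T) (h₂ : X₂ ⊆ T) (hX₁ : X₁.Finite) (hX₂ : X₂.Finite)
    (hs₁ : s₀ ∈ inNbr tail head X₁)
    (he₁ : ∑ᶠ v ∈ inNbr tail head X₁, f v = X₁.ncard)
    (hs₂ : s₀ ∈ inNbr tail head X₂)
    (he₂ : ∑ᶠ v ∈ inNbr tail head X₂, f v = X₂.ncard) :
    s₀ ∈ inNbr tail head (X₁ ∩ X₂) ∧
    (∑ᶠ v ∈ inNbr tail head (X₁ ∩ X₂), f v = (X₁ ∩ X₂).ncard) ∧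
    (X₁ ∩ X₂).Nonempty := by
  have hN₁ := finite_inNbr hX₁ fun x hx => hfin x (h₁ hx)
  have hN₂ := finite_inNbr hX₂ fun x hx => hfin x (h₂ hx)
  have hunion := hcond (X₁ ∪ X₂) (Set.union_subset h₁ h₂) (hX₁.union hX₂)
    (nonempty_of_mem_inNbr hs₁).inl
  have hinter : ((X₁ ∩ X₂).ncard : R) ≤ ∑ᶠ v ∈ inNbr tail head (X₁ ∩ X₂), f v := by
    rcases (X₁ ∩ X₂).eq_empty_or_nonempty with hempty | hne
    · rw [hempty, Set.ncard_empty, Nat.cast_zero]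
      exact finsum_nonneg fun v => finsum_nonneg fun _ => hf₀ v
    · exact hcond _ (Set.inter_subset_left.trans h₁) (hX₁.inter_of_left _) hne
  have hcard : ((X₁ ∪ X₂).ncard + (X₁ ∩ X₂).ncard : R) =
      ∑ᶠ v ∈ inNbr tail head X₁, f v + ∑ᶠ v ∈ inNbr tail head X₂, f v := by
    rw [he₁, he₂, ← Nat.cast_add, ← Nat.cast_add, Set.ncard_union_add_ncard_inter X₁ X₂ hX₁ hX₂]
  have hs : s₀ ∈ inNbr tail head (X₁ ∩ X₂) := by
    by_contra hs
    exact (hcard.symm.trans_le (add_le_add hunion hinter)).not_gt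
      (finsum_mem_inNbr_union_add_inter_lt hf₀ hN₁ hN₂ hs₁ hs₂ hs hf)
  have hle := (finsum_mem_inNbr_union_add_inter_le hf₀ hN₁ hN₂).trans_eq hcard.symm
  have heq := (add_eq_add_iff_eq_and_eq hunion hinter).1 ((add_le_add hunion hinter).antisymm hle)
  exact ⟨hs, heq.2.symm, nonempty_of_mem_inNbr hs⟩

/-- the family `ℰ = {X ⊆ T : s₀ ∈ N⁻(X), Σ_{v ∈ N⁻(X)} f(v) = |X|}`
is closed under intersection (in particular intersections are nonempty). -/
theorem stmt5 {V A : Type} [Fintype V] [Fintype A]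
    (tail head : A → V) (hloop : ∀ a : A, tail a ≠ head a)
    (T : Set V) (f : V → ℕ) (s₀ : V) (hs₀T : s₀ ∈ Set.univ \ T) (hf : 0 < f s₀)
    (hcond : ∀ X : Set V, X ⊆ T → X.Nonempty →
      X.ncard ≤ ∑ᶠ v ∈ inNbr tail head X, f v)
    (X₁ X₂ : Set V) (h₁ : X₁ ⊆ T) (h₂ : X₂ ⊆ T)
    (hs₁ : s₀ ∈ inNbr tail head X₁)
    (he₁ : ∑ᶠ v ∈ inNbr tail head X₁, f v = X₁.ncard)
    (hs₂ : s₀ ∈ inNbr tail head X₂)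
    (he₂ : ∑ᶠ v ∈ inNbr tail head X₂, f v = X₂.ncard) :
    s₀ ∈ inNbr tail head (X₁ ∩ X₂) ∧
    (∑ᶠ v ∈ inNbr tail head (X₁ ∩ X₂), f v = (X₁ ∩ X₂).ncard) ∧
    (X₁ ∩ X₂).Nonempty := by
  exact stmt5_general tail head T (fun _ _ => Set.toFinite _) f (fun _ => Nat.zero_le _) s₀ hf
    (fun X hX _ => hcond X hX) X₁ X₂ h₁ h₂ X₁.toFinite X₂.toFinite hs₁ he₁ hs₂ he₂
end

section
/- Let n, k, d be positive integers with n ≥ k+1, and let D₀ be the digraph defined in the context. If the arc set of D₀ is partitioned into k+1 branchings B′₁, …, B′_k, B′_{k+1} with Δ⁺(B′_{k+1}) ≤ d, then for every u ∈ U, the number of arcs of B′_{k+1} with tail u is exactly d. -/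
/-- Tail map of the digraph `D₀`: the arc `(i, j, t)` has tail `u_{i+j}`. -/
def tail0 (n k d : ℕ) : ZMod n × Fin (k + 1) × Fin d → ZMod n ⊕ ZMod n × Fin d :=
  fun a => Sum.inl (a.1 + (a.2.1.val : ZMod n))

/-- Head map of the digraph `D₀`: the arc `(i, j, t)` has head `(i, t) ∈ W_i`. -/
def head0 (n k d : ℕ) : ZMod n × Fin (k + 1) × Fin d → ZMod n ⊕ ZMod n × Fin d :=
  fun a => Sum.inr (a.1, a.2.2)

/-!
A vertex of `W` is the head of `k + 1` arcs, at most one in each of the `k + 1` branchings, so by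
pigeonhole it is the head of an arc of every branching. In particular the last branching has at
least `|W| = n d` arcs. All their tails lie in `U`, which has `n` vertices, each of out-degree at
most `d`, so equality holds at every vertex of `U`.
-/

section FiniteSets

variable {α β ι : Type*}

theorem inter_nonempty_of_subset_iUnion [Finite ι] {S : Set α} {B : ι → Set α}
    (hcover : S ⊆ ⋃ i, B i) (hB : ∀ i, (S ∩ B i).Subsingleton) (hcard : Nat.card ι ≤ S.ncard)
    (c : ι) : (S ∩ B c).Nonempty := by
  choose f hf using fun a : S => Set.mem_iUnion.1 (hcover a.2)
  have hinj : Function.Injective f := fun a b hab =>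
    Subtype.ext (hB (f a) ⟨a.2, hf a⟩ ⟨b.2, hab ▸ hf b⟩)
  obtain ⟨a, rfl⟩ := (hinj.bijective_of_nat_card_le hcard).surjective c
  exact ⟨a, a.2, hf a⟩

theorem ncard_fiber_eq_of_forall_le {s : Set α} {t : Set β} {f : α → β} {d : ℕ}
    (hs : s.Finite) (ht : t.Finite) (hf : Set.MapsTo f s t)
    (hle : ∀ b ∈ t, {a | a ∈ s ∧ f a = b}.ncard ≤ d) (hcard : t.ncard * d ≤ s.ncard) :
    ∀ b ∈ t, {a | a ∈ s ∧ f a = b}.ncard = d := by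
  classical
  lift s to Finset α using hs
  lift t to Finset β using ht
  have hfiber (b : β) : {a | a ∈ s ∧ f a = b}.ncard = (s.filter (f · = b)).card := by
    rw [← Set.ncard_coe_finset, Finset.coe_filter]
  simp only [Finset.mem_coe, hfiber, Set.ncard_coe_finset] at hle hcard ⊢
  refine (Finset.sum_eq_sum_iff_of_le hle).1 (le_antisymm (Finset.sum_le_sum hle) ?_)
  calc ∑ _b ∈ t, d = t.card * d := Finset.sum_const_nat fun _ _ => rfl
    _ ≤ s.card := hcard
    _ = ∑ b ∈ t, (s.filter (f · = b)).card := Finset.card_eq_sum_card_fiberwise hf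

end FiniteSets

section Digraph

variable {A V ι : Type*} [Finite A] [Finite ι] {tail head : A → V} {U W : Set V} {B : ι → Set A}

theorem surjOn_head_of_iUnion_eq_univ (hcover : (⋃ i, B i) = Set.univ)
    (hin : ∀ i v, {a | a ∈ B i ∧ head a = v}.ncard ≤ 1)
    (hW : ∀ w ∈ W, Nat.card ι ≤ {a | head a = w}.ncard) (c : ι) :
    Set.SurjOn head (B c) W := by
  intro w hw
  have hsub (i : ι) : ({a | head a = w} ∩ B i).Subsingleton := fun a ha b hb =>
    (Set.ncard_le_one (Set.toFinite _)).1 (hin i w) a ha.symm b hb.symm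
  obtain ⟨a, ha, hac⟩ :=
    inter_nonempty_of_subset_iUnion (hcover ▸ Set.subset_univ _) hsub (hW w hw) c
  exact ⟨a, hac, ha⟩

theorem stmt8_general [Finite V] {d : ℕ} (hcover : (⋃ i, B i) = Set.univ)
    (hin : ∀ i v, {a | a ∈ B i ∧ head a = v}.ncard ≤ 1)
    (hU : ∀ a, tail a ∈ U) (hW : ∀ w ∈ W, Nat.card ι ≤ {a | head a = w}.ncard)
    (hUW : U.ncard * d ≤ W.ncard) (c : ι)
    (hout : ∀ u ∈ U, {a | a ∈ B c ∧ tail a = u}.ncard ≤ d) :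
    ∀ u ∈ U, {a | a ∈ B c ∧ tail a = u}.ncard = d := by
  have hWB : W.ncard ≤ (B c).ncard :=
    (Set.ncard_le_ncard (surjOn_head_of_iUnion_eq_univ hcover hin hW c)).trans Set.ncard_image_le
  exact ncard_fiber_eq_of_forall_le (B c).toFinite U.toFinite (fun a _ => hU a) hout
    (hUW.trans hWB)

end Digraph

theorem ncard_head0_eq_inr (n k d : ℕ) (w : ZMod n × Fin d) :
    {a | head0 n k d a = Sum.inr w}.ncard = k + 1 := by
  have hrange : {a | head0 n k d a = Sum.inr w} =
      Set.range fun j : Fin (k + 1) => (w.1, j, w.2) := by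
    ext ⟨i, j, t⟩
    simp [head0, Prod.ext_iff, eq_comm]
  have hinj : Function.Injective fun j : Fin (k + 1) => (w.1, j, w.2) := fun _ _ h =>
    congrArg (·.2.1) h
  rw [hrange, Set.ncard_range_of_injective hinj, Nat.card_fin]

theorem ncard_range_inl_mul_eq_ncard_range_inr (α : Type*) (d : ℕ) :
    (Set.range (Sum.inl : α → α ⊕ α × Fin d)).ncard * d =
      (Set.range (Sum.inr : α × Fin d → α ⊕ α × Fin d)).ncard := by
  rw [Set.ncard_range_of_injective Sum.inl_injective,
    Set.ncard_range_of_injective Sum.inr_injective, Nat.card_prod, Nat.card_fin]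

/-- in any decomposition of `D₀` into `k+1` branchings with the
last one of out-degree at most `d`, every vertex `u ∈ U` has out-degree exactly
`d` in the last branching. -/
theorem stmt8 (n k d : ℕ) (hk : 0 < k) (hd : 0 < d) (hnk : k + 1 ≤ n)
    (B : Fin (k + 1) → Set (ZMod n × Fin (k + 1) × Fin d))
    (hdisj : ∀ i j, i ≠ j → Disjoint (B i) (B j))
    (hcover : (⋃ i, B i) = Set.univ)
    (hbr : ∀ i,
      (∀ v : ZMod n ⊕ ZMod n × Fin d,
        {a : ZMod n × Fin (k + 1) × Fin d | a ∈ B i ∧ head0 n k d a = v}.ncard ≤ 1) ∧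
      (∀ X : Set (ZMod n ⊕ ZMod n × Fin d), X.Nonempty →
        {a : ZMod n × Fin (k + 1) × Fin d |
          a ∈ B i ∧ tail0 n k d a ∈ X ∧ head0 n k d a ∈ X}.ncard ≤ X.ncard - 1))
    (hout : ∀ v : ZMod n ⊕ ZMod n × Fin d,
      {a : ZMod n × Fin (k + 1) × Fin d |
        a ∈ B (Fin.last k) ∧ tail0 n k d a = v}.ncard ≤ d) :
    ∀ u : ZMod n,
      {a : ZMod n × Fin (k + 1) × Fin d |
        a ∈ B (Fin.last k) ∧ tail0 n k d a = Sum.inl u}.ncard = d := by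
  have : NeZero n := ⟨by omega⟩
  exact fun u => stmt8_general hcover (fun i => (hbr i).1) (fun _ => Set.mem_range_self _)
    (Set.forall_mem_range.2 fun w => (Nat.card_fin _).trans_le (ncard_head0_eq_inr n k d w).ge)
    (ncard_range_inl_mul_eq_ncard_range_inr (ZMod n) d).le (Fin.last k) (fun v _ => hout v)
    (Sum.inl u) (Set.mem_range_self u)
end

section
/- Let n, k, d be positive integers with n ≥ k+1, and let D₀ be the digraph defined in the context. Then the fractional arboricity of D₀ equals d(k+1)n / ((d+1)n − 1); that is, for every X ⊆ V(D₀) with |X| ≥ 2, ((d+1)n − 1)·|A[X]| ≤ d(k+1)n·(|X|−1), and equality holds for X = V(D₀) (which has (d+1)n vertices and d(k+1)n arcs). -/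
/-!
Let `P` be the set of `m` with `u_m ∈ X`, let `q_i` be the number of vertices of `W_i` in `X`, and
let `x_i` be the number of elements of `P` in the window `{i, …, i + k}`. Then `|A[X]| = ∑ q_i x_i`
and `∑ x_i = (k + 1)|P|`. For fixed `P` the claim is linear in each `q_i ∈ [0, d]`, and comparing
the endpoints `q_i = 0` and `q_i = d` gives
`((d + 1)n - 1) q_i x_i ≤ d(k + 1)n q_i + d(n - 1) x_i`, with slack at least `d(n - 1)` if the
window meets both `P` and its complement. After summation the claim requires a total slack of
`d(k + 1)(n - |P|)`, so for `P` nonempty and proper it suffices that `k + 1` windows are split in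
this way. They are, because the numbers of windows meeting `P` and meeting `Pᶜ` add up to at least
`n + k + 1`: this follows from the Cauchy–Davenport inequality, which holds in any finite cyclic
group when one summand is an arithmetic progression along a generator.
-/

open Finset
open scoped Pointwise

section Translates

variable {G : Type*} [AddCommGroup G] [DecidableEq G]

/-- The arithmetic progression `{0, g, …, k • g}`, which has `k + 1` terms when `k < addOrderOf g`.
For `g = 1` in `ZMod n`, its translate by `i` is the set of tails of the arcs of `D₀` into `W_i`. -/
def progression (g : G) (k : ℕ) : Finset G :=
  (range (k + 1)).image (· • g)

lemma progression_nonempty (g : G) (k : ℕ) : (progression g k).Nonempty :=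
  nonempty_range_add_one.image _

lemma progression_succ (g : G) (k : ℕ) : progression g (k + 1) = progression g k + {0, g} := by
  have hrange : range (k + 1 + 1) = range (k + 1) + {0, 1} := by
    ext j
    simp only [mem_add, mem_insert, mem_singleton, mem_range]
    refine ⟨fun hj => ⟨j - 1, by omega, j - (j - 1), by omega, by omega⟩, ?_⟩
    rintro ⟨a, ha, b, hb, rfl⟩
    omega
  change image (multiplesHom G g) (range (k + 1 + 1)) =
    image (multiplesHom G g) (range (k + 1)) + {0, g}
  rw [hrange, image_add]
  simp

lemma card_progression_le (g : G) (k : ℕ) : #(progression g k) ≤ k + 1 :=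
  card_image_le.trans_eq (card_range _)

lemma card_progression {g : G} {k : ℕ} (hk : k < addOrderOf g) : #(progression g k) = k + 1 := by
  have hinj : Set.InjOn (· • g) (range (k + 1) : Set ℕ) :=
    nsmul_injOn_Iio_addOrderOf.mono fun j hj => (mem_range_succ_iff.1 hj).trans_lt hk
  rw [progression, card_image_of_injOn hinj, card_range]

lemma card_vadd_progression_inter {g : G} {k : ℕ} (hk : k < addOrderOf g) (i : G) (P : Finset G) :
    #((i +ᵥ progression g k) ∩ P) = #{j : Fin (k + 1) | i + j.val • g ∈ P} := by
  have hinj : Function.Injective fun j : Fin (k + 1) => i + j.val • g := fun a b hab =>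
    Fin.ext <| nsmul_injOn_Iio_addOrderOf (Set.mem_Iio.2 (by omega)) (Set.mem_Iio.2 (by omega))
      (add_left_cancel hab)
  rw [← card_image_of_injective _ hinj]
  congr 1
  ext u
  simp only [progression, mem_inter, mem_vadd_finset, mem_image, mem_range, mem_filter, mem_univ,
    true_and, vadd_eq_add, Fin.exists_iff]
  grind

variable [Fintype G]

lemma card_lt_card_add_pair {g : G} (hg : AddSubgroup.zmultiples g = ⊤) {P : Finset G}
    (hP : P.Nonempty) (hP' : P ≠ univ) : #P < #(P + {0, g}) := by
  have hsub : P ⊆ P + {0, g} := subset_add_left P (by simp)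
  refine card_lt_card (hsub.ssubset_of_ne fun heq => hP' ?_)
  have hshift : g +ᵥ P ⊆ P := by
    rintro _ hx
    obtain ⟨p, hp, rfl⟩ := mem_vadd_finset.1 hx
    rw [vadd_eq_add, add_comm, heq]
    exact add_mem_add hp (mem_insert_of_mem (mem_singleton_self g))
  have hstab : AddAction.stabilizer G P = ⊤ := by
    rw [← top_le_iff, ← hg, AddSubgroup.zmultiples_le, AddAction.mem_stabilizer_iff]
    exact eq_of_subset_of_card_le hshift (card_vadd_finset g P).ge
  obtain ⟨p, hp⟩ := hP
  refine eq_univ_iff_forall.2 fun x => ?_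
  have hx : (x - p) +ᵥ P = P := AddAction.mem_stabilizer_iff.1 (hstab ▸ AddSubgroup.mem_top _)
  simpa [hx] using vadd_mem_vadd_finset (a := x - p) hp

lemma add_progression_eq_univ_or_card_add_le {g : G} (hg : AddSubgroup.zmultiples g = ⊤)
    {P : Finset G} (hP : P.Nonempty) (k : ℕ) :
    P + progression g k = univ ∨ #P + k ≤ #(P + progression g k) := by
  induction k with
  | zero => simp [progression]
  | succ k ih =>
    rw [progression_succ, ← add_assoc]
    by_cases huniv : P + progression g k = univ
    · exact .inl <| univ_subset_iff.1 <| huniv ▸ subset_add_left (P + progression g k) (by simp)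
    · have hgrow := card_lt_card_add_pair hg (hP.add (progression_nonempty g k)) huniv
      have hcard := ih.resolve_left huniv
      omega

lemma sub_progression_eq_univ_or_card_add_le {g : G} (hg : AddSubgroup.zmultiples g = ⊤)
    {P : Finset G} (hP : P.Nonempty) (k : ℕ) :
    P - progression g k = univ ∨ #P + k ≤ #(P - progression g k) := by
  have h := add_progression_eq_univ_or_card_add_le hg hP.neg k
  rwa [show -P + progression g k = -(P - progression g k) by rw [neg_sub', sub_neg_eq_add],
    card_neg, card_neg, neg_eq_iff_eq_neg, show -(univ : Finset G) = univ by simp] at h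

lemma sum_card_vadd_inter (S P : Finset G) : ∑ i : G, #((i +ᵥ S) ∩ P) = #S * #P := by
  have hdeg (u : G) : #{i : G | u ∈ i +ᵥ S} = #S := by
    rw [← card_neg S, ← card_vadd_finset u (-S)]
    congr 1
    ext i
    simp [← neg_vadd_mem_iff, neg_add_eq_sub]
  calc ∑ i : G, #((i +ᵥ S) ∩ P) = ∑ i : G, #{u ∈ P | u ∈ i +ᵥ S} := by
        simp only [filter_mem_eq_inter, inter_comm]
    _ = ∑ u ∈ P, #{i : G | u ∈ i +ᵥ S} :=
        sum_card_bipartiteAbove_eq_sum_card_bipartiteBelow fun i u => u ∈ i +ᵥ S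
    _ = #S * #P := by simp only [hdeg, sum_const, smul_eq_mul, mul_comm]

/-- The translates of `S` that are split by `P`, i.e. meet both `P` and its complement; a translate
is recorded by its offset `i`. -/
def splitTranslates (S P : Finset G) : Finset G :=
  {i | ((i +ᵥ S) ∩ P).Nonempty ∧ ((i +ᵥ S) \ P).Nonempty}

lemma splitTranslates_eq_sub_inter_sub (S P : Finset G) :
    splitTranslates S P = (P - S) ∩ (Pᶜ - S) := by
  have hmeet (i : G) (Q : Finset G) : ((i +ᵥ S) ∩ Q).Nonempty ↔ i ∈ Q - S := by
    simp only [Finset.Nonempty, mem_inter, mem_vadd_finset, mem_sub, vadd_eq_add]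
    grind
  ext i
  simp only [splitTranslates, mem_filter, mem_univ, true_and, sdiff_eq_inter_compl, hmeet,
    mem_inter]

lemma card_progression_le_card_splitTranslates {g : G} (hg : AddSubgroup.zmultiples g = ⊤) {k : ℕ}
    (hk : 0 < k) {P : Finset G} (hP : P.Nonempty) (hP' : P ≠ univ) :
    #(progression g k) ≤ #(splitTranslates (progression g k) P) := by
  have hPc : Pᶜ.Nonempty := by rwa [nonempty_iff_ne_empty, Ne, compl_eq_empty_iff]
  have hmeet := sub_progression_eq_univ_or_card_add_le hg hP k
  have hmiss := sub_progression_eq_univ_or_card_add_le hg hPc k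
  have hS := card_progression_le g k
  rw [splitTranslates_eq_sub_inter_sub]
  generalize progression g k = S at *
  rcases hmeet with hmeet | hmeet
  · rw [hmeet, univ_inter]
    exact card_le_card_sub_left hPc
  rcases hmiss with hmiss | hmiss
  · rw [hmiss, inter_univ]
    exact card_le_card_sub_left hP
  have hunion : #((P - S) ∪ (Pᶜ - S)) ≤ Fintype.card G := card_le_univ _
  have hinter := card_union_add_card_inter (P - S) (Pᶜ - S)
  have hcompl := card_add_card_compl P
  omega

end Translates

section Density

-- The slack of the inequality is linear in `q`: `slack_zero` and `slack_full` are its values at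
-- `q = 0` and `q = d`, each weighted as in linear interpolation between them.
lemma mul_add_le_of_le_of_le {n d q x y e : ℤ} (hn : 1 ≤ n) (hd : 1 ≤ d) (hq : 0 ≤ q)
    (hqd : q ≤ d) (he : 0 ≤ e) (hex : e ≤ x) (hey : e ≤ y) :
    ((d + 1) * n - 1) * (q * x) + d * (n - 1) * e ≤ d * (x + y) * n * q + d * (n - 1) * x := by
  have slack_zero : 0 ≤ (d - q) * ((n - 1) * (x - e)) :=
    mul_nonneg (by omega) (mul_nonneg (by omega) (by omega))
  have slack_full : 0 ≤ q * (d * n * y - (n - 1) * e) := by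
    refine mul_nonneg hq (sub_nonneg.2 ?_)
    calc (n - 1) * e ≤ n * y := mul_le_mul (by omega) hey he (by omega)
      _ ≤ d * (n * y) := le_mul_of_one_le_left (mul_nonneg (by omega) (by omega)) hd
      _ = d * n * y := by ring
  linear_combination slack_zero + slack_full

variable {G : Type*} [AddCommGroup G] [DecidableEq G] [Fintype G]

lemma mul_sum_card_vadd_inter_add_le {d : ℕ} (hd : 0 < d) (S P : Finset G) {q : G → ℕ}
    (hq : ∀ i, q i ≤ d) :
    (((d + 1) * Fintype.card G - 1) * ∑ i, (q i * #((i +ᵥ S) ∩ P) : ℤ) +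
        d * (Fintype.card G - 1) * #(splitTranslates S P) : ℤ) ≤
      d * #S * Fintype.card G * ∑ i, (q i : ℤ) + d * (Fintype.card G - 1) * (#S * #P) := by
  have hn : 1 ≤ Fintype.card G := Fintype.card_pos
  have hterm (i : G) :
      (((d + 1) * Fintype.card G - 1) * (q i * #((i +ᵥ S) ∩ P)) +
          d * (Fintype.card G - 1) * (if i ∈ splitTranslates S P then 1 else 0) : ℤ) ≤
        d * #S * Fintype.card G * q i + d * (Fintype.card G - 1) * #((i +ᵥ S) ∩ P) := by
    have hS : (#S : ℤ) = #((i +ᵥ S) ∩ P) + #((i +ᵥ S) \ P) := by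
      rw [← card_vadd_finset i S]
      exact_mod_cast (card_inter_add_card_sdiff (i +ᵥ S) P).symm
    rw [hS]
    refine mul_add_le_of_le_of_le (by exact_mod_cast hn) (by exact_mod_cast hd) (by positivity)
      (by exact_mod_cast hq i) (by split_ifs <;> simp) ?_ ?_
    · split_ifs with hi
      · exact_mod_cast (mem_filter.1 hi).2.1.card_pos
      · positivity
    · split_ifs with hi
      · exact_mod_cast (mem_filter.1 hi).2.2.card_pos
      · positivity
  have hsum := sum_le_sum fun i (_ : i ∈ univ) => hterm i
  simp only [sum_add_distrib, ← mul_sum, sum_boole, filter_mem_eq_inter, univ_inter] at hsum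
  rwa [show ∑ i : G, (#((i +ᵥ S) ∩ P) : ℤ) = #S * #P from
    mod_cast sum_card_vadd_inter S P] at hsum

theorem mul_sum_card_vadd_inter_le {d : ℕ} (hd : 0 < d) {S P : Finset G}
    (hsplit : P.Nonempty → P ≠ univ → #S ≤ #(splitTranslates S P)) {q : G → ℕ}
    (hq : ∀ i, q i ≤ d) :
    ((d + 1) * Fintype.card G - 1) * ∑ i, q i * #((i +ᵥ S) ∩ P) ≤
      d * #S * Fintype.card G * (#P + ∑ i, q i - 1) := by
  rcases P.eq_empty_or_nonempty with rfl | hP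
  · simp
  have hn : 1 ≤ Fintype.card G := Fintype.card_pos
  have hpos : 1 ≤ #P := hP.card_pos
  have hgain : (#S * (Fintype.card G - #P) : ℤ) ≤
      (Fintype.card G - 1) * #(splitTranslates S P) := by
    rcases eq_or_ne P univ with rfl | hP'
    · rw [card_univ, sub_self, mul_zero]
      exact mul_nonneg (by omega) (by positivity)
    · calc (#S * (Fintype.card G - #P) : ℤ) ≤ #S * (Fintype.card G - 1) :=
            mul_le_mul_of_nonneg_left (by omega) (by positivity)
        _ ≤ #(splitTranslates S P) * (Fintype.card G - 1) :=
            mul_le_mul_of_nonneg_right (by exact_mod_cast hsplit hP hP') (by omega)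
        _ = (Fintype.card G - 1) * #(splitTranslates S P) := mul_comm _ _
  have hsum := mul_sum_card_vadd_inter_add_le hd S P hq
  zify [show 1 ≤ (d + 1) * Fintype.card G from Nat.mul_pos d.succ_pos hn,
    show 1 ≤ #P + ∑ i, q i by omega]
  linear_combination hsum + (d : ℤ) * hgain

end Density

section Counting

lemma ncard_eq_card_inl_add_sum_card_inr {α ι τ : Type*} [Fintype α] [Fintype ι] [Fintype τ]
    (X : Set (α ⊕ ι × τ)) [DecidablePred (· ∈ X)] :
    X.ncard = #{u | Sum.inl u ∈ X} + ∑ i, #{t | Sum.inr (i, t) ∈ X} := by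
  rw [Set.ncard_eq_toFinset_card', ← Set.filter_mem_univ_eq_toFinset]
  simp only [card_filter, Fintype.sum_sum_type, Fintype.sum_prod_type]

lemma ncard_setOf_tail0_mem_head0_mem {n k d : ℕ} [NeZero n] (hkn : k < n)
    (X : Set (ZMod n ⊕ ZMod n × Fin d)) [DecidablePred (· ∈ X)] :
    {a : ZMod n × Fin (k + 1) × Fin d | tail0 n k d a ∈ X ∧ head0 n k d a ∈ X}.ncard =
      ∑ i : ZMod n, #{t | Sum.inr (i, t) ∈ X} *
        #((i +ᵥ progression (1 : ZMod n) k) ∩ ({u | Sum.inl u ∈ X} : Finset (ZMod n))) := by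
  have hord : k < addOrderOf (1 : ZMod n) := by rwa [ZMod.addOrderOf_one]
  have harcs : {a : ZMod n × Fin (k + 1) × Fin d | tail0 n k d a ∈ X ∧ head0 n k d a ∈ X} =
      ({a | Sum.inl (a.1 + (a.2.1.val : ZMod n)) ∈ X ∧ Sum.inr (a.1, a.2.2) ∈ X} :
        Finset (ZMod n × Fin (k + 1) × Fin d)) := by
    simp [tail0, head0]
  rw [harcs, Set.ncard_coe_finset]
  simp only [card_vadd_progression_inter hord, card_filter, Fintype.sum_prod_type, mem_filter,
    mem_univ, true_and, nsmul_one, sum_mul_sum]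
  refine sum_congr rfl fun i _ => ?_
  rw [sum_comm]
  simp only [boole_mul, ← ite_and, and_comm]

end Counting

/-- the fractional arboricity of `D₀` equals
`d(k+1)n / ((d+1)n − 1)`: the density inequality holds for every vertex set `X`
with `|X| ≥ 2`, and equality holds for `X = V(D₀)`, which has `(d+1)n` vertices
and `d(k+1)n` arcs. -/
theorem stmt10 (n k d : ℕ) (hk : 0 < k) (hd : 0 < d) (hnk : k + 1 ≤ n) :
    (∀ X : Set (ZMod n ⊕ ZMod n × Fin d), 2 ≤ X.ncard →
      ((d + 1) * n - 1) *
          {a : ZMod n × Fin (k + 1) × Fin d |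
            tail0 n k d a ∈ X ∧ head0 n k d a ∈ X}.ncard
        ≤ d * (k + 1) * n * (X.ncard - 1)) ∧
    (Set.univ : Set (ZMod n ⊕ ZMod n × Fin d)).ncard = (d + 1) * n ∧
    (Set.univ : Set (ZMod n × Fin (k + 1) × Fin d)).ncard = d * (k + 1) * n ∧
    ((d + 1) * n - 1) * (Set.univ : Set (ZMod n × Fin (k + 1) × Fin d)).ncard
      = d * (k + 1) * n * ((Set.univ : Set (ZMod n ⊕ ZMod n × Fin d)).ncard - 1) := by
  have : NeZero n := ⟨by omega⟩
  have hverts : (Set.univ : Set (ZMod n ⊕ ZMod n × Fin d)).ncard = (d + 1) * n := by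
    simp only [Set.ncard_univ, Nat.card_sum, Nat.card_prod, Nat.card_zmod, Nat.card_fin]
    ring
  have harcs : (Set.univ : Set (ZMod n × Fin (k + 1) × Fin d)).ncard = d * (k + 1) * n := by
    simp only [Set.ncard_univ, Nat.card_prod, Nat.card_zmod, Nat.card_fin]
    ring
  refine ⟨fun X _ => ?_, hverts, harcs, by rw [hverts, harcs, mul_comm]⟩
  classical
  have hord : k < addOrderOf (1 : ZMod n) := by rwa [ZMod.addOrderOf_one]
  have hgen : AddSubgroup.zmultiples (1 : ZMod n) = ⊤ :=
    (AddSubgroup.eq_top_iff' _).2 fun x => ⟨x.val, by simp⟩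
  rw [ncard_setOf_tail0_mem_head0_mem hnk, ncard_eq_card_inl_add_sum_card_inr]
  simpa only [card_progression hord, ZMod.card] using
    mul_sum_card_vadd_inter_le hd (card_progression_le_card_splitTranslates hgen hk)
      (S := progression 1 k) (q := fun i => #{t | Sum.inr (i, t) ∈ X})
      fun i => (card_le_univ _).trans_eq (Fintype.card_fin d)
end

section
/- Let n, k, d be positive integers with n ≥ k+1, and let D₀ be the digraph defined in the context. Let V* ⊆ V(D₀) with |V*| ≥ 2 be such that |A[V*]|/(|V*|−1) = γ(D₀), i.e. |A[V*]|·(|X|−1) ≥ |A[X]|·(|V*|−1) for every X ⊆ V(D₀) with |X| ≥ 2, and suppose V* is maximal under inclusion among sets with this property. If V* ∩ W_{i₀} ≠ ∅ for some i₀ ∈ ℤ_n, then W_{i₀} ⊆ V*. -/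
/-- The arcs of `D₀` with both ends in `X`. -/
def arcs0 (n k d : ℕ) (X : Set (ZMod n ⊕ ZMod n × Fin d)) :
    Set (ZMod n × Fin (k + 1) × Fin d) :=
  {a : ZMod n × Fin (k + 1) × Fin d | tail0 n k d a ∈ X ∧ head0 n k d a ∈ X}

/-!
Let `e` be the number of arcs between `w ∈ V*` and `V*`. Comparing `V*` with `V* \ {w}` gives
`|A[V*]| ≤ e * (|V*| - 1)`, so adjoining to `V*` a vertex joined to it by at least `e` arcs does
not lower the ratio `|A[V*]| / (|V*| - 1)`. Hence a maximal witness already contains that vertex.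
In `D₀` the vertices of `W_i` all have the same in-neighbours and no out-neighbours.
-/

section Digraph

variable {V A : Type*} (tail head : A → V)

/-- The set `A[X]` of arcs with both ends in `X`, in the digraph with vertex type `V`, arc type `A`
and the given tail and head maps; parallel arcs are allowed. For `tail0 n k d` and `head0 n k d`
it unfolds to `arcs0 n k d X`. -/
def arcsWithin (X : Set V) : Set A :=
  {a | tail a ∈ X ∧ head a ∈ X}

/-- The set of arcs, in either direction, between the vertex `v` and a vertex of `X`; it measures
how `|A[X]|` changes when `v` is adjoined to or deleted from `X`. -/
def arcsBetween (v : V) (X : Set V) : Set A :=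
  {a | tail a = v ∧ head a ∈ X ∨ tail a ∈ X ∧ head a = v}

/-- `S` attains the fractional arboricity, the maximum of `|A[X]| / (|X| - 1)` over the vertex
sets `X` with `2 ≤ |X|`. The denominators are cleared, so that the condition is about natural
numbers; infinite sets have `ncard = 0` and are therefore excluded. -/
def IsArboricityWitness (S : Set V) : Prop :=
  2 ≤ S.ncard ∧ ∀ X : Set V, 2 ≤ X.ncard →
    (arcsWithin tail head X).ncard * (S.ncard - 1) ≤
      (arcsWithin tail head S).ncard * (X.ncard - 1)

variable {tail head}

theorem arcsWithin_singleton (loopless : ∀ a, tail a ≠ head a) (v : V) :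
    arcsWithin tail head {v} = ∅ :=
  Set.eq_empty_of_forall_notMem fun a ⟨htail, hhead⟩ ↦ loopless a (htail.trans hhead.symm)

theorem arcsWithin_insert (loopless : ∀ a, tail a ≠ head a) (v : V) (X : Set V) :
    arcsWithin tail head (insert v X) =
      arcsWithin tail head (X \ {v}) ∪ arcsBetween tail head v X := by
  ext a
  have := loopless a
  simp only [arcsWithin, arcsBetween, Set.mem_union, Set.mem_ofPred_eq, Set.mem_insert_iff,
    Set.mem_sdiff, Set.mem_singleton_iff]
  grind

theorem disjoint_arcsWithin_sdiff_arcsBetween (v : V) (X : Set V) :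
    Disjoint (arcsWithin tail head (X \ {v})) (arcsBetween tail head v X) := by
  rw [Set.disjoint_left]
  rintro a ⟨⟨-, htail⟩, -, hhead⟩ (⟨rfl, -⟩ | ⟨-, rfl⟩)
  · exact htail rfl
  · exact hhead rfl

theorem ncard_arcsWithin_insert [Finite A] (loopless : ∀ a, tail a ≠ head a) (v : V)
    (X : Set V) :
    (arcsWithin tail head (insert v X)).ncard =
      (arcsWithin tail head (X \ {v})).ncard + (arcsBetween tail head v X).ncard := by
  rw [arcsWithin_insert loopless,
    Set.ncard_union_eq (disjoint_arcsWithin_sdiff_arcsBetween v X)]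

namespace IsArboricityWitness

variable {S : Set V}

protected theorem finite (hS : IsArboricityWitness tail head S) : S.Finite :=
  Set.finite_of_ncard_pos (zero_lt_two.trans_le hS.1)

theorem ncard_mul_le_of_nonempty (loopless : ∀ a, tail a ≠ head a)
    (hS : IsArboricityWitness tail head S) {X : Set V} (hfin : X.Finite) (hne : X.Nonempty) :
    (arcsWithin tail head X).ncard * (S.ncard - 1) ≤
      (arcsWithin tail head S).ncard * (X.ncard - 1) := by
  obtain hone | htwo := (Nat.one_le_of_lt (hne.ncard_pos hfin)).eq_or_lt
  · obtain ⟨v, rfl⟩ := Set.ncard_eq_one.1 hone.symm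
    simp [arcsWithin_singleton loopless]
  · exact hS.2 X htwo

theorem ncard_arcsWithin_le [Finite A] (loopless : ∀ a, tail a ≠ head a)
    (hS : IsArboricityWitness tail head S) {w : V} (hw : w ∈ S) :
    (arcsWithin tail head S).ncard ≤ (arcsBetween tail head w S).ncard * (S.ncard - 1) := by
  have hcard : (S \ {w}).ncard + 1 = S.ncard :=
    Set.ncard_sdiff_singleton_add_one hw hS.finite
  have harcs := ncard_arcsWithin_insert loopless w S
  rw [Set.insert_eq_of_mem hw] at harcs
  obtain ⟨m, hm⟩ : ∃ m, S.ncard = m + 2 := Nat.exists_eq_add_of_le' hS.1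
  have hdel : (arcsWithin tail head (S \ {w})).ncard * (m + 1) ≤
      (arcsWithin tail head S).ncard * m := by
    have hne : (S \ {w}).Nonempty := Set.nonempty_of_ncard_ne_zero (by omega)
    convert hS.ncard_mul_le_of_nonempty loopless hS.finite.sdiff hne using 2 <;> omega
  have hmul : (arcsWithin tail head S).ncard * (m + 1) =
      (arcsWithin tail head (S \ {w})).ncard * (m + 1) +
        (arcsBetween tail head w S).ncard * (m + 1) := by
    rw [harcs, add_mul]
  rw [show S.ncard - 1 = m + 1 by omega]
  linarith

protected theorem insert [Finite A] (loopless : ∀ a, tail a ≠ head a)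
    (hS : IsArboricityWitness tail head S) {v : V} (hv : v ∉ S)
    (hdeg : (arcsWithin tail head S).ncard ≤
      (arcsBetween tail head v S).ncard * (S.ncard - 1)) :
    IsArboricityWitness tail head (insert v S) := by
  have hcard : (insert v S).ncard = S.ncard + 1 := Set.ncard_insert_of_notMem hv hS.finite
  have htwo := hS.1
  refine ⟨by omega, fun X hX ↦ ?_⟩
  rw [ncard_arcsWithin_insert loopless, Set.sdiff_singleton_eq_self hv, hcard]
  have hwit := hS.2 X hX
  obtain ⟨m, hm⟩ : ∃ m, S.ncard = m + 2 := Nat.exists_eq_add_of_le' hS.1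
  rw [show S.ncard - 1 = m + 1 by omega] at hwit hdeg
  rw [show S.ncard + 1 - 1 = m + 2 by omega]
  refine Nat.le_of_mul_le_mul_right ?_ m.succ_pos
  calc (arcsWithin tail head X).ncard * (m + 2) * (m + 1)
      = (arcsWithin tail head X).ncard * (m + 1) * (m + 2) := by ring
    _ ≤ (arcsWithin tail head S).ncard * (X.ncard - 1) * (m + 2) := by gcongr
    _ = ((arcsWithin tail head S).ncard * (m + 1) + (arcsWithin tail head S).ncard) *
          (X.ncard - 1) := by ring
    _ ≤ ((arcsWithin tail head S).ncard * (m + 1) +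
          (arcsBetween tail head v S).ncard * (m + 1)) * (X.ncard - 1) := by gcongr
    _ = ((arcsWithin tail head S).ncard + (arcsBetween tail head v S).ncard) *
          (X.ncard - 1) * (m + 1) := by ring

end IsArboricityWitness

theorem stmt11_general [Finite A] (loopless : ∀ a, tail a ≠ head a) {S : Set V}
    (hS : Maximal (IsArboricityWitness tail head) S) {v w : V} (hw : w ∈ S)
    (hdeg : (arcsBetween tail head w S).ncard ≤ (arcsBetween tail head v S).ncard) :
    v ∈ S := by
  by_contra hv
  have hbound := (hS.prop.ncard_arcsWithin_le loopless hw).trans (Nat.mul_le_mul_right _ hdeg)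
  exact hv (hS.mem_of_prop_insert (hS.prop.insert loopless hv hbound))

end Digraph

theorem tail0_ne_head0 (n k d : ℕ) (a : ZMod n × Fin (k + 1) × Fin d) :
    tail0 n k d a ≠ head0 n k d a :=
  Sum.inl_ne_inr

theorem ncard_arcsBetween_inr (n k d : ℕ) (X : Set (ZMod n ⊕ ZMod n × Fin d)) (i : ZMod n)
    (t : Fin d) :
    (arcsBetween (tail0 n k d) (head0 n k d) (Sum.inr (i, t)) X).ncard =
      {j : Fin (k + 1) | Sum.inl (i + (j.val : ZMod n)) ∈ X}.ncard := by
  have hinj : Function.Injective fun j : Fin (k + 1) ↦ (i, j, t) := fun _ _ h ↦ by simpa using h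
  rw [← Set.ncard_image_of_injective _ hinj]
  congr 1
  ext ⟨i', j, t'⟩
  simp only [arcsBetween, tail0, head0, reduceCtorEq, false_and, false_or, Sum.inr.injEq,
    Prod.mk.injEq, Set.mem_ofPred_eq, Set.mem_image]
  grind

/-- a maximal witness `V*` of the fractional arboricity of `D₀`
which meets `W_{i₀}` contains all of `W_{i₀}`. -/
theorem stmt11 (n k d : ℕ) (hk : 0 < k) (hd : 0 < d) (hnk : k + 1 ≤ n)
    (Vs : Set (ZMod n ⊕ ZMod n × Fin d)) (h2 : 2 ≤ Vs.ncard)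
    (hwit : ∀ X : Set (ZMod n ⊕ ZMod n × Fin d), 2 ≤ X.ncard →
      (arcs0 n k d X).ncard * (Vs.ncard - 1) ≤ (arcs0 n k d Vs).ncard * (X.ncard - 1))
    (hmax : ∀ S : Set (ZMod n ⊕ ZMod n × Fin d), Vs ⊆ S → 2 ≤ S.ncard →
      (∀ X : Set (ZMod n ⊕ ZMod n × Fin d), 2 ≤ X.ncard →
        (arcs0 n k d X).ncard * (S.ncard - 1) ≤ (arcs0 n k d S).ncard * (X.ncard - 1)) →
      S = Vs)
    (i₀ : ZMod n) (hmeet : ∃ t : Fin d, Sum.inr (i₀, t) ∈ Vs) :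
    ∀ t : Fin d, Sum.inr (i₀, t) ∈ Vs := by
  have : NeZero n := ⟨by omega⟩
  obtain ⟨t₀, ht₀⟩ := hmeet
  exact fun t ↦ stmt11_general (tail0_ne_head0 n k d)
    ⟨⟨h2, hwit⟩, fun S hS hle ↦ (hmax S hle hS.1 hS.2).le⟩ ht₀
    (by simp only [ncard_arcsBetween_inr, le_refl])
end
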